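/- arXiv:2411.07275 — 2 statements merged into one kernel-verified Lean document; each statement's English description precedes it below -/
import Mathlib

section
/- The inclusion problem for erasing pattern languages (without constraints) is undecidable: for every finite alphabet Σ with |Σ| ≥ 2 there is no algorithm that, given two patterns α and β over Σ ∪ ℕ, decides whether L_E(α) ⊆ L_E(β). Formally, the predicate 'L_E(α) ⊆ L_E(β)' on pairs of patterns (finite words over Σ ∪ ℕ) is not a computable predicate. -/
/-- Patterns over `Σ ∪ X` with variable set `X = ℕ`. -/
abbrev Pattern (σ : Type) := List (σ ⊕ ℕ)

/-- Applying a substitution (determined by its action on variables, and fixing every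
terminal) to a pattern; this is the restriction of the induced monoid morphism
`(Σ ∪ X)* → Σ*`. -/
def applySub {σ : Type} (s : ℕ → List σ) : Pattern σ → List σ
  | [] => []
  | c :: p => Sum.elim (fun a => [a]) s c ++ applySub s p

/-- The erasing pattern language `L_E(p)` of a plain pattern. -/
def LangE {σ : Type} (p : Pattern σ) : Set (List σ) :=
  {w | ∃ s : ℕ → List σ, applySub s p = w}


namespace PatUndec
open Turing

/-! ### A fixed Turing machine with undecidable halting problem -/

lemma trNum_bit (m : Num) : ∀ b : Bool, Num.bit b m ≠ 0 → PartrecToTM2.trNum (Num.bit b m) =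
    (if b then PartrecToTM2.Γ'.bit1 else PartrecToTM2.Γ'.bit0) :: PartrecToTM2.trNum m := by
  intro b hb
  cases m with
  | zero => cases b with
    | false => exact absurd rfl hb
    | true => rfl
  | pos p => cases b <;> rfl

lemma trNat_rec (n : ℕ) (hn : n ≠ 0) : PartrecToTM2.trNat n =
    (if n % 2 = 1 then PartrecToTM2.Γ'.bit1 else PartrecToTM2.Γ'.bit0) ::
      PartrecToTM2.trNat (n / 2) := by
  have key : ((n : ℕ) : Num) = Num.bit (decide (n % 2 = 1)) ((n / 2 : ℕ) : Num) := by
    have h : ((Num.bit (decide (n % 2 = 1)) ((n / 2 : ℕ) : Num) : Num) : ℕ) = n := by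
      rcases Nat.mod_two_eq_zero_or_one n with h | h
      · simp only [h, Num.bit]
        norm_num
        omega
      · simp only [h, Num.bit]
        norm_num
        omega
    rw [← Num.to_nat_inj, h]; simp
  unfold PartrecToTM2.trNat
  rw [key, trNum_bit]
  · simp
  · rw [← key]
    intro h
    exact hn (by exact_mod_cast h)

lemma undecidable_nat : ∃ f : ℕ →. ℕ, Nat.Partrec f ∧ ¬ ComputablePred (fun n => (f n).Dom) := by
  refine ⟨fun n => (Denumerable.ofNat Nat.Partrec.Code n).eval 0, ?_, ?_⟩
  · refine Partrec.nat_iff.1 ?_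
    exact Nat.Partrec.Code.eval_part.comp (Computable.ofNat _) (Computable.const 0)
  · intro h
    refine ComputablePred.halting_problem 0 ?_
    refine ComputablePred.computable_of_manyOneReducible ?_ h
    exact ⟨fun c => Encodable.encode c, Computable.encode, fun c => by simp⟩

theorem exists_TM0 : ∃ (Γ Λ : Type) (_ : Inhabited Γ) (_ : Inhabited Λ) (_ : Fintype Γ)
    (M : TM0.Machine Γ Λ) (S : Finset Λ) (hd d0 d1 : Γ) (f : ℕ → List Γ),
    f 0 = [] ∧ (∀ n, n ≠ 0 → f n = f (n / 2) ++ [if n % 2 = 1 then d1 else d0]) ∧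
    TM0.Supports M (↑S : Set Λ) ∧ ¬ ComputablePred (fun n : ℕ => (TM0.eval M (hd :: f n)).Dom) := by
  obtain ⟨g, hg, hgu⟩ := undecidable_nat
  obtain ⟨c, hc⟩ := ToPartrec.Code.exists_code (Nat.Partrec'.part_iff₁.2 (Partrec.nat_iff.2 hg))
  let _ : Inhabited PartrecToTM2.Λ' := ⟨PartrecToTM2.trNormal c PartrecToTM2.Cont'.halt⟩
  have hs := PartrecToTM2.tr_supports c PartrecToTM2.Cont'.halt
  have hs1 := TM2to1.tr_supports _ hs
  have hs0 := TM1to0.tr_supports _ hs1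
  let em : PartrecToTM2.Γ' → TM2to1.Γ' PartrecToTM2.K' (fun _ => PartrecToTM2.Γ') :=
    fun a => (false, Function.update (fun _ ↦ none) PartrecToTM2.K'.main (some a))
  have hK : Fintype PartrecToTM2.K' :=
    ⟨{.main, .rev, .aux, .stack}, by intro x; cases x <;> simp⟩
  refine ⟨_, _, inferInstance, inferInstance, inferInstance,
    TM1to0.tr (TM2to1.tr PartrecToTM2.tr), _, (true, (em PartrecToTM2.Γ'.cons).2),
    em PartrecToTM2.Γ'.bit0, em PartrecToTM2.Γ'.bit1,
    fun n => ((PartrecToTM2.trNat n).reverse.map em), by simp, ?_, hs0, ?_⟩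
  · intro n hn
    beta_reduce
    rw [trNat_rec n hn]
    simp only [List.reverse_cons, List.map_append, List.map_cons, List.map_nil]
    split_ifs <;> rfl
  · intro h
    apply hgu
    convert h using 2 with n
    have e1 : ((true, (em PartrecToTM2.Γ'.cons).2) ::
      ((PartrecToTM2.trNat n).reverse.map em)) = TM2to1.trInit PartrecToTM2.K'.main
        (PartrecToTM2.trList [n]) := by
      have e0 : (PartrecToTM2.trList [n]).reverse =
        PartrecToTM2.Γ'.cons :: (PartrecToTM2.trNat n).reverse := by simp
      unfold TM2to1.trInit
      rw [e0]
      rfl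
    beta_reduce
    erw [e1]
    rw [TM1to0.tr_eval]
    refine Iff.trans ?_ (TM2to1.tr_eval_dom PartrecToTM2.tr PartrecToTM2.K'.main
      (PartrecToTM2.trList [n])).symm
    have e2 : (TM2.eval PartrecToTM2.tr PartrecToTM2.K'.main (PartrecToTM2.trList [n])).Dom ↔
       (StateTransition.eval (TM2.step PartrecToTM2.tr) (PartrecToTM2.init c [n])).Dom := by
      have : (TM2.init PartrecToTM2.K'.main (PartrecToTM2.trList [n]) : PartrecToTM2.Cfg') =
          PartrecToTM2.init c [n] := by
        unfold TM2.init PartrecToTM2.init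
        congr 1
        funext k
        cases k <;> rfl
      rw [← this]; rfl
    refine Iff.trans ?_ e2.symm
    rw [PartrecToTM2.tr_eval]
    have := hc (n ::ᵥ List.Vector.nil)
    change _ ↔ (ToPartrec.Code.eval c [n]).Dom
    erw [this]
    simp

/-! ### Two-dimensional Collatz-like systems -/

def cstep (mA mB : ℕ) (T : ℕ → ℕ → Option (ℕ × ℕ × ℕ × ℕ)) (c : ℕ × ℕ) : Option (ℕ × ℕ) :=
  (T (c.1 % mA) (c.2 % mB)).map fun t =>
    (t.1 * (c.1 / mA) + t.2.1, t.2.2.1 * (c.2 / mB) + t.2.2.2)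

/-- The number `n` represents the half tape `L` in base `p`. -/
def Rep {Γ : Type} [Inhabited Γ] (e : Γ → ℕ) (p : ℕ) (L : ListBlank Γ) (n : ℕ) : Prop :=
  ∀ i, e (L.nth i) = n / p ^ i % p

lemma Rep.head {Γ : Type} [Inhabited Γ] {e : Γ → ℕ} {p : ℕ} {L : ListBlank Γ} {n : ℕ}
    (h : Rep e p L n) : e L.head = n % p := by
  simpa using h 0

lemma Rep.tail {Γ : Type} [Inhabited Γ] {e : Γ → ℕ} {p : ℕ} {L : ListBlank Γ} {n : ℕ}
    (h : Rep e p L n) : Rep e p L.tail (n / p) := by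
  intro i
  rw [← ListBlank.nth_succ, h (i + 1), Nat.div_div_eq_div_mul, pow_succ']

lemma Rep.cons {Γ : Type} [Inhabited Γ] {e : Γ → ℕ} {p : ℕ} {L : ListBlank Γ} {n : ℕ}
    (h : Rep e p L n) (a : Γ) (ha : e a < p) : Rep e p (L.cons a) (e a + p * n) := by
  intro i
  cases i with
  | zero => simp [Nat.mod_eq_of_lt ha]
  | succ i =>
    rw [ListBlank.nth_succ, ListBlank.tail_cons, h i, pow_succ', ← Nat.div_div_eq_div_mul,
      Nat.add_mul_div_left _ _ (by omega), Nat.div_eq_of_lt ha, zero_add]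

lemma Rep.list {Γ : Type} [Inhabited Γ] {e : Γ → ℕ} {p : ℕ} (he0 : e default = 0)
    (hep : ∀ a, e a < p) (l : List Γ) :
    Rep e p (ListBlank.mk l) (l.foldr (fun a acc => e a + p * acc) 0) := by
  induction l with
  | nil => intro i; simp [ListBlank.nth_mk, he0]
  | cons a l ih =>
    rw [← ListBlank.cons_mk]
    exact ih.cons a (hep a)

section sim
variable {Γ Λ : Type} [Inhabited Γ] [Inhabited Λ] (M : TM0.Machine Γ Λ)
  (e : Γ → ℕ) (p : ℕ) (dec : ℕ → Γ) (idx : Λ → ℕ) (N : ℕ) (dq : ℕ → Λ)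

/-- The table of the Collatz-like system simulating `M`. -/
def table (i j : ℕ) : Option (ℕ × ℕ × ℕ × ℕ) :=
  (M (dq (i / p % N)) (dec (i % p))).map fun qs =>
    match qs.2 with
    | TM0.Stmt.write c => (p * N * p, e c + p * (idx qs.1 + N * (i / p / N)), p, j)
    | TM0.Stmt.move Dir.right =>
      (p * N * p * p, j + p * (idx qs.1 + N * (e (dec (i % p)) + p * (i / p / N))), 1, 0)
    | TM0.Stmt.move Dir.left =>
      (p * N, (i / p / N) + p * idx qs.1, p * p, e (dec (i % p)) + p * j)

def TrRel (S : Finset Λ) (c : TM0.Cfg Γ Λ) (x : ℕ × ℕ) : Prop :=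
  c.q ∈ S ∧ ∃ l, Rep e p c.Tape.left l ∧ Rep e p c.Tape.right x.2 ∧
    x.1 = e c.Tape.head + p * (idx c.q + N * l)

lemma sim_respects (S : Finset Λ) (hS : TM0.Supports M (↑S : Set Λ))
    (hep : ∀ a, e a < p) (hdec : ∀ a, dec (e a) = a)
    (hidx : ∀ q ∈ S, idx q < N ∧ dq (idx q) = q) :
    StateTransition.Respects (TM0.step M) (cstep (p * (N * p)) p (table M e p dec idx N dq))
      (TrRel e p idx N S) := by
  rintro ⟨q, T⟩ ⟨x, y⟩ ⟨hq, l, hl, hr, hx⟩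
  simp only at hq hl hr hx
  have hp : 0 < p := lt_of_le_of_lt (Nat.zero_le _) (hep default)
  have hN : 0 < N := lt_of_le_of_lt (Nat.zero_le _) (hidx q hq).1
  have ha := hep T.head
  have hk := (hidx q hq).1
  have x1 : x % p = e T.head := by
    rw [hx, Nat.add_mul_mod_self_left, Nat.mod_eq_of_lt ha]
  have x2 : x / p = idx q + N * l := by
    rw [hx, Nat.add_mul_div_left _ _ hp, Nat.div_eq_of_lt ha, zero_add]
  have x3 : (idx q + N * l) % N = idx q := by
    rw [Nat.add_mul_mod_self_left, Nat.mod_eq_of_lt hk]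
  have x4 : (idx q + N * l) / N = l := by
    rw [Nat.add_mul_div_left _ _ hN, Nat.div_eq_of_lt hk, zero_add]
  have x5 : x / (p * (N * p)) = l / p := by
    rw [← Nat.div_div_eq_div_mul, ← Nat.div_div_eq_div_mul, x2, x4]
  have x6 : x % (p * (N * p)) = e T.head + p * (idx q + N * (l % p)) := by
    rw [Nat.mod_mul, x1, x2, Nat.mod_mul, x3, x4]
  have i1 : (e T.head + p * (idx q + N * (l % p))) % p = e T.head := by
    rw [Nat.add_mul_mod_self_left, Nat.mod_eq_of_lt ha]
  have i2 : (e T.head + p * (idx q + N * (l % p))) / p = idx q + N * (l % p) := by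
    rw [Nat.add_mul_div_left _ _ hp, Nat.div_eq_of_lt ha, zero_add]
  have i3 : (idx q + N * (l % p)) % N = idx q := by
    rw [Nat.add_mul_mod_self_left, Nat.mod_eq_of_lt hk]
  have i4 : (idx q + N * (l % p)) / N = l % p := by
    rw [Nat.add_mul_div_left _ _ hN, Nat.div_eq_of_lt hk, zero_add]
  have hdl : l = l % p + p * (l / p) := (Nat.mod_add_div l p).symm
  have hdy : y = y % p + p * (y / p) := (Nat.mod_add_div y p).symm
  have hc : cstep (p * (N * p)) p (table M e p dec idx N dq) (x, y) =
    (table M e p dec idx N dq (e T.head + p * (idx q + N * (l % p))) (y % p)).map fun t =>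
    (t.1 * (l / p) + t.2.1, t.2.2.1 * (y / p) + t.2.2.2) := by
    simp only [cstep, x5, x6]
  have ht : table M e p dec idx N dq (e T.head + p * (idx q + N * (l % p))) (y % p) =
    (M q T.head).map fun qs =>
    match qs.2 with
    | TM0.Stmt.write c => (p * N * p, e c + p * (idx qs.1 + N * (l % p)), p, y % p)
    | TM0.Stmt.move Dir.right =>
      (p * N * p * p, y % p + p * (idx qs.1 + N * (e T.head + p * (l % p))), 1, 0)
    | TM0.Stmt.move Dir.left =>
      (p * N, (l % p) + p * idx qs.1, p * p, e T.head + p * (y % p)) := by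
    simp only [table, i1, i2, i3, i4, hdec, (hidx q hq).2]
  rw [ht] at hc
  rcases hM : M q T.head with _ | ⟨q', s⟩
  · have : TM0.step M ⟨q, T⟩ = none := by simp [TM0.step, hM]
    rw [this]
    simp only
    rw [hc, hM]; rfl
  · have hq' : q' ∈ S := by
      refine hS.2 (?_ : (q', s) ∈ M q T.head) hq
      rw [hM]; rfl
    rw [hM] at hc
    rcases s with (_ | _) | c
    · have : TM0.step M ⟨q, T⟩ = some ⟨q', T.move Dir.left⟩ := by simp [TM0.step, hM]
      rw [this]
      refine ⟨_, ⟨hq', l / p, ?_, ?_, ?_⟩, Relation.TransGen.single hc⟩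
      · exact hl.tail
      · have := hr.cons T.head ha
        have h3 : e T.head + p * y = p * p * (y / p) + (e T.head + p * (y % p)) := by
          conv_lhs => rw [hdy]
          ring
        rw [h3] at this
        exact this
      · have := hl.head
        simp only [Tape.move]
        rw [this]; ring
    · have : TM0.step M ⟨q, T⟩ = some ⟨q', T.move Dir.right⟩ := by simp [TM0.step, hM]
      rw [this]
      refine ⟨_, ⟨hq', e T.head + p * l, ?_, ?_, ?_⟩, Relation.TransGen.single hc⟩
      · exact hl.cons _ ha
      · have := hr.tail
        rw [show y / p = 1 * (y / p) + 0 by ring] at this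
        exact this
      · have := hr.head
        simp only [Tape.move]
        rw [this]
        conv_rhs => rw [hdl]
        ring
    · have : TM0.step M ⟨q, T⟩ = some ⟨q', T.write c⟩ := by simp [TM0.step, hM]
      rw [this]
      refine ⟨_, ⟨hq', l, ?_, ?_, ?_⟩, Relation.TransGen.single hc⟩
      · exact hl
      · have h : Rep e p T.right (p * (y / p) + y % p) := by
          rw [Nat.div_add_mod]; exact hr
        exact h
      · simp only [Tape.write]
        conv_rhs => rw [hdl]
        ring
end sim

def digStep (p c0 c1 : ℕ) (x : ℕ × ℕ) : ℕ × ℕ :=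
  if x.1 = 0 then x else (x.1 / 2, (if x.1 % 2 = 1 then c1 else c0) + p * x.2)

lemma digStep_primrec (p c0 c1 : ℕ) : Primrec (digStep p c0 c1) := by
  unfold digStep
  refine Primrec.ite (Primrec.eq.comp Primrec.fst (Primrec.const 0)) Primrec.id ?_
  refine Primrec.pair (Primrec.nat_div.comp Primrec.fst (Primrec.const 2)) ?_
  refine Primrec.nat_add.comp ?_ (Primrec.nat_mul.comp (Primrec.const p) Primrec.snd)
  exact Primrec.ite (Primrec.eq.comp (Primrec.nat_mod.comp Primrec.fst (Primrec.const 2))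
    (Primrec.const 1)) (Primrec.const c1) (Primrec.const c0)

lemma dig_iter {Γ : Type} (e : Γ → ℕ) (p : ℕ) (d0 d1 : Γ) (f : ℕ → List Γ) (hf0 : f 0 = [])
    (hf : ∀ n, n ≠ 0 → f n = f (n / 2) ++ [if n % 2 = 1 then d1 else d0]) (k : ℕ) :
    ∀ n ≤ k, ∀ acc, ((digStep p (e d0) (e d1))^[k] (n, acc)).2 =
      (f n).foldr (fun a acc => e a + p * acc) acc := by
  induction k with
  | zero => intro n hn acc; obtain rfl : n = 0 := by omega
            simp [hf0]
  | succ k ih =>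
    intro n hn acc
    rw [Function.iterate_succ_apply]
    by_cases h : n = 0
    · subst h
      have := ih 0 (by omega) acc
      simpa [digStep] using this
    · rw [hf n h, List.foldr_append]
      have := ih (n / 2) (by omega) ((if n % 2 = 1 then e d1 else e d0) + p * acc)
      simp only [digStep, h, if_false]
      rw [this]
      split_ifs <;> simp

theorem exists_collatz : ∃ (mA mB : ℕ) (T : ℕ → ℕ → Option (ℕ × ℕ × ℕ × ℕ)) (A0 : ℕ) (B0 : ℕ → ℕ),
    0 < mA ∧ 0 < mB ∧ Primrec B0 ∧
    ¬ ComputablePred (fun n : ℕ => (StateTransition.eval (cstep mA mB T) (A0, B0 n)).Dom) := by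
  classical
  obtain ⟨Γ, Λ, _, _, _, M, S, hd, d0, d1, f, hf0, hf, hS, hM⟩ := exists_TM0
  obtain ⟨e, p, dec, he0, hep, hdec⟩ : ∃ (e : Γ → ℕ) (p : ℕ) (dec : ℕ → Γ), e default = 0 ∧
      (∀ a, e a < p) ∧ ∀ a, dec (e a) = a := by
    let e : Γ → ℕ := fun a => if a = default then 0 else (Fintype.equivFin Γ a : ℕ) + 1
    have hinj : Function.Injective e := by
      intro a b h
      simp only [e] at h
      split_ifs at h with h1 h2 h2
      · rw [h1, h2]
      · have : (Fintype.equivFin Γ a) = (Fintype.equivFin Γ b) := Fin.ext (by omega)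
        simpa using this
    refine ⟨e, Fintype.card Γ + 1, Function.invFun e, by simp [e], ?_,
      Function.leftInverse_invFun hinj⟩
    intro a
    have := (Fintype.equivFin Γ a).2
    simp only [e]
    split_ifs <;> omega
  obtain ⟨idx, dq, hidx⟩ : ∃ (idx : Λ → ℕ) (dq : ℕ → Λ),
      ∀ q ∈ S, idx q < S.card ∧ dq (idx q) = q := by
    refine ⟨fun q => S.toList.idxOf q, fun i => S.toList.getD i default, fun q hq => ?_⟩
    have : S.toList.idxOf q < S.toList.length := List.idxOf_lt_length_iff.2 (by simpa using hq)
    refine ⟨by simpa using this, ?_⟩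
    show S.toList.getD _ default = q
    rw [List.getD_eq_getElem _ _ this, List.getElem_idxOf]
  have hp : 0 < p := lt_of_le_of_lt (Nat.zero_le _) (hep default)
  have hN : 0 < S.card := lt_of_le_of_lt (Nat.zero_le _) (hidx default hS.1).1
  have hR := sim_respects M e p dec idx S.card dq S hS hep hdec hidx
  refine ⟨p * (S.card * p), p, table M e p dec idx S.card dq, e hd + p * idx default,
    fun n => ((digStep p (e d0) (e d1))^[n] (n, 0)).2, by positivity, hp, ?_, ?_⟩
  · exact Primrec.snd.comp (Primrec.nat_iterate Primrec.id
      (Primrec.pair Primrec.id (Primrec.const 0))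
      ((digStep_primrec p (e d0) (e d1)).comp Primrec.snd).to₂)
  · intro h
    apply hM
    convert h using 2 with n
    have := StateTransition.tr_eval_dom hR (a₁ := TM0.init (hd :: f n))
      (a₂ := (e hd + p * idx default, ((digStep p (e d0) (e d1))^[n] (n, 0)).2)) ?_
    · rw [this]; rfl
    · refine ⟨hS.1, 0, ?_, ?_, ?_⟩
      · exact Rep.list he0 hep []
      · rw [dig_iter e p d0 d1 f hf0 hf n n le_rfl]
        exact Rep.list he0 hep (f n)
      · simp [Tape.mk', TM0.init, Tape.mk₁, Tape.mk₂]

/-! ### Forbidden windows -/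

abbrev Row := ℕ × ℕ × ℕ × ℕ

def rowVal (t : ℕ → ℕ) (r : Row) : ℕ := r.1 + r.2.1 * t 0 + r.2.2.1 * t 1 + r.2.2.2 * t 2

def inst (t : ℕ → ℕ) (w : List Row) : List ℕ := w.map (rowVal t)

def clsWins (mA mB i j : ℕ) (q : ℕ × ℕ × ℕ × ℕ) : List (List Row) :=
  [[(2 * i + 2, 2 * mA, 0, 0), (2 * j + 1, 0, 2 * mB, 0), (0, 0, 0, 0)],
   [(2 * i + 2, 2 * mA, 0, 0), (2 * j + 1, 0, 2 * mB, 0), (2 * (q.2.1 + 1) + 2, 2 * q.1, 0, 2)],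
   [(2 * i + 2, 2 * mA, 0, 0), (2 * j + 1, 0, 2 * mB, 0), (2 * q.2.1 + 2, 2 * q.1, 0, 0),
    (2 * (q.2.2.2 + 1) + 1, 0, 2 * q.2.2.1, 2)]] ++
  (List.range q.2.1).map (fun e =>
    [(2 * i + 2, 2 * mA, 0, 0), (2 * j + 1, 0, 2 * mB, 0), (2 * e + 2, 0, 0, 0)]) ++
  (List.range q.1).map (fun e =>
    [(2 * (mA + i) + 2, 2 * mA, 0, 2 * mA), (2 * j + 1, 0, 2 * mB, 0),
     (2 * (q.2.1 + e) + 2, 2 * q.1, 0, 0)]) ++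
  (List.range q.2.2.2).map (fun e =>
    [(2 * i + 2, 2 * mA, 0, 0), (2 * j + 1, 0, 2 * mB, 0), (2 * q.2.1 + 2, 2 * q.1, 0, 0),
     (2 * e + 1, 0, 0, 0)]) ++
  (List.range q.2.2.1).map (fun e =>
    [(2 * i + 2, 2 * mA, 0, 0), (2 * (mB + j) + 1, 0, 2 * mB, 2 * mB),
     (2 * q.2.1 + 2, 2 * q.1, 0, 0), (2 * (q.2.2.2 + e) + 1, 0, 2 * q.2.2.1, 0)])

def allWins (mA mB : ℕ) (T : ℕ → ℕ → Option (ℕ × ℕ × ℕ × ℕ)) : List (List Row) :=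
  [[(0, 0, 0, 0), (0, 0, 0, 0), (0, 0, 0, 0)],
   [(2, 2, 0, 0), (0, 0, 2, 0)],
   [(1, 2, 0, 0), (1, 0, 2, 0)]] ++
  (List.range mA).flatMap (fun i => (List.range mB).flatMap fun j =>
    match T i j with
    | none => []
    | some q => clsWins mA mB i j q)

inductive Sem (st : ℕ × ℕ → Option (ℕ × ℕ)) : List ℕ → Prop
  | e0 : Sem st [0, 0, 0]
  | e1 (p q) : Sem st [2 * p + 2, 2 * q]
  | e2 (p q) : Sem st [2 * p + 1, 2 * q + 1]
  | e3 (x y c) : st (x, y) = some c → Sem st [2 * x + 2, 2 * y + 1, 0]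
  | e4 (x y c x') : st (x, y) = some c → x' ≠ c.1 → Sem st [2 * x + 2, 2 * y + 1, 2 * x' + 2]
  | e5 (x y c y') : st (x, y) = some c → y' ≠ c.2 →
      Sem st [2 * x + 2, 2 * y + 1, 2 * c.1 + 2, 2 * y' + 1]

lemma allWins_ne_nil {mA mB T win} (h : win ∈ allWins mA mB T) : win ≠ [] := by
  simp only [allWins, List.mem_append, List.mem_flatMap] at h
  rcases h with h | ⟨i, _, j, _, h⟩
  · rintro rfl; simp at h
  · rintro rfl
    split at h
    · simp at h
    · simp [clsWins] at h

lemma mem_allWins {mA mB T i j q win} (hi : i < mA) (hj : j < mB) (hT : T i j = some q)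
    (h : win ∈ clsWins mA mB i j q) : win ∈ allWins mA mB T := by
  simp only [allWins, List.mem_append, List.mem_flatMap]
  right
  refine ⟨i, by simpa using hi, j, by simpa using hj, ?_⟩
  rw [hT]; exact h

lemma sem_of_mem {mA mB : ℕ} {T win} (hA : 0 < mA) (hB : 0 < mB)
    (h : win ∈ allWins mA mB T) (t : ℕ → ℕ) : Sem (cstep mA mB T) (inst t win) := by
  simp only [allWins, List.mem_append, List.mem_flatMap] at h
  rcases h with h | ⟨i, hi, j, hj, h⟩
  · simp only [List.mem_cons, List.not_mem_nil, or_false] at h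
    rcases h with rfl | rfl | rfl
    · simpa [inst, rowVal] using Sem.e0
    · have := Sem.e1 (st := cstep mA mB T) (t 0) (t 1)
      simpa [inst, rowVal, add_comm] using this
    · have := Sem.e2 (st := cstep mA mB T) (t 0) (t 1)
      simpa [inst, rowVal, add_comm] using this
  · split at h
    · simp at h
    rename_i q hq
    obtain ⟨a, b, c, d⟩ := q
    simp only [List.mem_range] at hi hj
    have key : ∀ l r, cstep mA mB T (mA * l + i, mB * r + j) = some (a * l + b, c * r + d) := by
      intro l r
      have h1 : (mA * l + i) % mA = i := by rw [Nat.mul_add_mod, Nat.mod_eq_of_lt hi]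
      have h2 : (mB * r + j) % mB = j := by rw [Nat.mul_add_mod, Nat.mod_eq_of_lt hj]
      have h3 : (mA * l + i) / mA = l := by
        rw [Nat.mul_add_div hA, Nat.div_eq_of_lt hi, add_zero]
      have h4 : (mB * r + j) / mB = r := by
        rw [Nat.mul_add_div hB, Nat.div_eq_of_lt hj, add_zero]
      simp [cstep, h1, h2, h3, h4, hq]
    simp only [clsWins, List.mem_append, List.mem_cons, List.not_mem_nil, or_false,
      List.mem_map, List.mem_range] at h
    rcases h with ((((rfl | rfl | rfl) | ⟨e, he, rfl⟩) | ⟨e, he, rfl⟩) | ⟨e, he, rfl⟩) | ⟨e, he, rfl⟩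
    · convert Sem.e3 _ _ _ (key (t 0) (t 1)) using 1
      simp only [inst, rowVal, List.map_cons, List.map_nil, List.cons.injEq, and_true]
      refine ⟨?_, ?_, ?_⟩ <;> ring
    · convert Sem.e4 _ _ _ (a * t 0 + b + 1 + t 2) (key (t 0) (t 1)) (by simp; omega) using 1
      simp only [inst, rowVal, List.map_cons, List.map_nil, List.cons.injEq, and_true]
      refine ⟨?_, ?_, ?_⟩ <;> ring
    · convert Sem.e5 _ _ _ (c * t 1 + d + 1 + t 2) (key (t 0) (t 1)) (by simp; omega) using 1
      simp only [inst, rowVal, List.map_cons, List.map_nil, List.cons.injEq, and_true]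
      refine ⟨?_, ?_, ?_, ?_⟩ <;> ring
    · convert Sem.e4 _ _ _ e (key (t 0) (t 1)) (by simp only; omega) using 1
      simp only [inst, rowVal, List.map_cons, List.map_nil, List.cons.injEq, and_true]
      refine ⟨?_, ?_, ?_⟩ <;> ring
    · convert Sem.e4 _ _ _ (b + a * t 0 + e) (key (t 0 + 1 + t 2) (t 1)) (by simp only; nlinarith [Nat.zero_le (a * t 2)]) using 1
      simp only [inst, rowVal, List.map_cons, List.map_nil, List.cons.injEq, and_true]
      refine ⟨?_, ?_, ?_⟩ <;> ring
    · convert Sem.e5 _ _ _ e (key (t 0) (t 1)) (by simp only; omega) using 1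
      simp only [inst, rowVal, List.map_cons, List.map_nil, List.cons.injEq, and_true]
      refine ⟨?_, ?_, ?_, ?_⟩ <;> ring
    · convert Sem.e5 _ _ _ (d + c * t 1 + e) (key (t 0) (t 1 + 1 + t 2)) (by simp only; nlinarith [Nat.zero_le (c * t 2)]) using 1
      simp only [inst, rowVal, List.map_cons, List.map_nil, List.cons.injEq, and_true]
      refine ⟨?_, ?_, ?_, ?_⟩ <;> ring

def par (a b c : ℕ) (n : ℕ) : ℕ := if n = 0 then a else if n = 1 then b else c

lemma sub_form {a l b x : ℕ} (h : x ≠ a * l + b) :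
    (∃ s, x = a * l + b + 1 + s) ∨ x < b ∨
      ∃ q s e, e < a ∧ l = q + 1 + s ∧ x = b + a * q + e := by
  rcases lt_or_ge (a * l + b) x with h1 | h1
  · exact Or.inl ⟨x - (a * l + b + 1), by omega⟩
  · by_cases hb : x < b
    · exact Or.inr (Or.inl hb)
    · right; right
      have h2 : x - b < a * l := by omega
      have ha : 0 < a := by
        rcases Nat.eq_zero_or_pos a with rfl | ha
        · simp at h2
        · exact ha
      have h3 : (x - b) / a < l := by
        rw [Nat.div_lt_iff_lt_mul ha, mul_comm]; exact h2
      refine ⟨(x - b) / a, l - (x - b) / a - 1, (x - b) % a, Nat.mod_lt _ ha, by omega, ?_⟩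
      have := Nat.div_add_mod (x - b) a
      omega

lemma mem_of_sem {mA mB : ℕ} {T} (hA : 0 < mA) (hB : 0 < mB) {w : List ℕ}
    (h : Sem (cstep mA mB T) w) (k : ℕ) (hk : ∀ n ∈ w, n < k) :
    ∃ win ∈ allWins mA mB T, ∃ t : ℕ → ℕ, (∀ j, t j < k) ∧ w = inst t win := by
  have hform : ∀ x y cc, cstep mA mB T (x, y) = some cc → ∃ i j a b c d l r, i < mA ∧ j < mB ∧
      T i j = some (a, b, c, d) ∧ x = mA * l + i ∧ y = mB * r + j ∧
      cc = (a * l + b, c * r + d) ∧ l ≤ x ∧ r ≤ y := by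
    intro x y cc hc
    simp only [cstep, Option.map_eq_some_iff] at hc
    obtain ⟨⟨a, b, c, d⟩, h1, rfl⟩ := hc
    exact ⟨x % mA, y % mB, a, b, c, d, x / mA, y / mB, Nat.mod_lt _ hA, Nat.mod_lt _ hB, h1,
      (Nat.div_add_mod _ _).symm, (Nat.div_add_mod _ _).symm, rfl, Nat.div_le_self _ _,
      Nat.div_le_self _ _⟩
  have hpar : ∀ a b c, a < k → b < k → c < k → ∀ j, par a b c j < k := by
    intro a b c ha hb hc j
    unfold par
    split_ifs <;> assumption
  cases h with
  | e0 =>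
    refine ⟨[(0, 0, 0, 0), (0, 0, 0, 0), (0, 0, 0, 0)], by simp [allWins], fun _ => 0, ?_, ?_⟩
    · intro _; exact hk 0 (by simp)
    · simp [inst, rowVal]
  | e1 p q =>
    simp only [List.forall_mem_cons] at hk
    refine ⟨[(2, 2, 0, 0), (0, 0, 2, 0)], by simp [allWins], par p q 0, ?_, ?_⟩
    · apply hpar <;> omega
    · simp [inst, rowVal, par, add_comm]
  | e2 p q =>
    simp only [List.forall_mem_cons] at hk
    refine ⟨[(1, 2, 0, 0), (1, 0, 2, 0)], by simp [allWins], par p q 0, ?_, ?_⟩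
    · apply hpar <;> omega
    · simp [inst, rowVal, par, add_comm]
  | e3 x y c hc =>
    obtain ⟨i, j, a, b, c, d, l, r, hi, hj, hT, hx, hy, rfl, hl, hr⟩ := hform _ _ _ hc
    simp only [List.forall_mem_cons] at hk
    refine ⟨[(2 * i + 2, 2 * mA, 0, 0), (2 * j + 1, 0, 2 * mB, 0), (0, 0, 0, 0)],
      mem_allWins hi hj hT (by simp [clsWins]), par l r 0, ?_, ?_⟩
    · apply hpar <;> omega
    · simp only [inst, rowVal, par, List.map_cons, List.map_nil, List.cons.injEq, and_true]
      rw [hx, hy]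
      refine ⟨?_, ?_, ?_⟩ <;> simp <;> ring
  | e4 x y c x' hc hne =>
    obtain ⟨i, j, a, b, c, d, l, r, hi, hj, hT, hx, hy, rfl, hl, hr⟩ := hform _ _ _ hc
    simp only [List.forall_mem_cons] at hk
    rcases sub_form hne with ⟨s, hs⟩ | hb | ⟨q, s, e, he, hls, hs⟩
    · refine ⟨[(2 * i + 2, 2 * mA, 0, 0), (2 * j + 1, 0, 2 * mB, 0),
        (2 * (b + 1) + 2, 2 * a, 0, 2)],
        mem_allWins hi hj hT (by simp [clsWins]), par l r s, ?_, ?_⟩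
      · apply hpar <;> omega
      · simp only [inst, rowVal, par, List.map_cons, List.map_nil, List.cons.injEq, and_true]
        rw [hx, hy, hs]
        refine ⟨?_, ?_, ?_⟩ <;> simp <;> ring
    · refine ⟨[(2 * i + 2, 2 * mA, 0, 0), (2 * j + 1, 0, 2 * mB, 0), (2 * x' + 2, 0, 0, 0)],
        mem_allWins hi hj hT (by simp [clsWins]; omega), par l r 0, ?_, ?_⟩
      · apply hpar <;> omega
      · simp only [inst, rowVal, par, List.map_cons, List.map_nil, List.cons.injEq, and_true]
        rw [hx, hy]
        refine ⟨?_, ?_, ?_⟩ <;> simp <;> ring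
    · refine ⟨[(2 * (mA + i) + 2, 2 * mA, 0, 2 * mA), (2 * j + 1, 0, 2 * mB, 0),
        (2 * (b + e) + 2, 2 * a, 0, 0)],
        mem_allWins hi hj hT ?_, par q r s, ?_, ?_⟩
      · simp only [clsWins, List.mem_append, List.mem_map, List.mem_range]
        exact Or.inl (Or.inl (Or.inr ⟨e, he, rfl⟩))
      · apply hpar <;> omega
      · simp only [inst, rowVal, par, List.map_cons, List.map_nil, List.cons.injEq, and_true]
        rw [hx, hy, hs, hls]
        refine ⟨?_, ?_, ?_⟩ <;> simp <;> ring
  | e5 x y c y' hc hne =>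
    obtain ⟨i, j, a, b, c, d, l, r, hi, hj, hT, hx, hy, rfl, hl, hr⟩ := hform _ _ _ hc
    simp only [List.forall_mem_cons] at hk
    rcases sub_form hne with ⟨s, hs⟩ | hb | ⟨q, s, e, he, hls, hs⟩
    · refine ⟨[(2 * i + 2, 2 * mA, 0, 0), (2 * j + 1, 0, 2 * mB, 0), (2 * b + 2, 2 * a, 0, 0),
        (2 * (d + 1) + 1, 0, 2 * c, 2)],
        mem_allWins hi hj hT (by simp [clsWins]), par l r s, ?_, ?_⟩
      · apply hpar <;> omega
      · simp only [inst, rowVal, par, List.map_cons, List.map_nil, List.cons.injEq, and_true]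
        rw [hx, hy, hs]
        refine ⟨?_, ?_, ?_, ?_⟩ <;> simp <;> ring
    · refine ⟨[(2 * i + 2, 2 * mA, 0, 0), (2 * j + 1, 0, 2 * mB, 0), (2 * b + 2, 2 * a, 0, 0),
        (2 * y' + 1, 0, 0, 0)],
        mem_allWins hi hj hT ?_, par l r 0, ?_, ?_⟩
      · simp only [clsWins, List.mem_append, List.mem_map, List.mem_range]
        exact Or.inl (Or.inr ⟨y', hb, rfl⟩)
      · apply hpar <;> omega
      · simp only [inst, rowVal, par, List.map_cons, List.map_nil, List.cons.injEq, and_true]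
        rw [hx, hy]
        refine ⟨?_, ?_, ?_, ?_⟩ <;> simp <;> ring
    · refine ⟨[(2 * i + 2, 2 * mA, 0, 0), (2 * (mB + j) + 1, 0, 2 * mB, 2 * mB),
        (2 * b + 2, 2 * a, 0, 0), (2 * (d + e) + 1, 0, 2 * c, 0)],
        mem_allWins hi hj hT ?_, par l q s, ?_, ?_⟩
      · simp only [clsWins, List.mem_append, List.mem_map, List.mem_range]
        exact Or.inr ⟨e, he, rfl⟩
      · apply hpar <;> omega
      · simp only [inst, rowVal, par, List.map_cons, List.map_nil, List.cons.injEq, and_true]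
        rw [hx, hy, hs, hls]
        refine ⟨?_, ?_, ?_, ?_⟩ <;> simp <;> ring

lemma exists_history (st : ℕ × ℕ → Option (ℕ × ℕ)) (c : ℕ × ℕ)
    (h : (StateTransition.eval st c).Dom) :
    ∃ X : List ℕ, X ≠ [] ∧
      ∀ w, Sem st w → ¬ w <:+: (2 * c.1 + 2) :: (2 * c.2 + 1) :: (X ++ [0]) := by
  rw [Part.dom_iff_mem] at h
  obtain ⟨b, hb⟩ := h
  refine StateTransition.evalInduction hb ?_
  clear hb c
  rintro ⟨x, y⟩ hb ih
  rcases hs : st (x, y) with _ | ⟨x', y'⟩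
  · refine ⟨[0], by simp, ?_⟩
    intro w hw
    cases hw <;> simp [List.infix_cons_iff, List.prefix_cons_iff] <;> grind
  · obtain ⟨X, hX, hX'⟩ := ih (x', y') hs
    refine ⟨(2 * x' + 2) :: (2 * y' + 1) :: X, by simp, ?_⟩
    intro w hw hin
    simp only [List.cons_append] at hin
    rw [List.infix_cons_iff, List.infix_cons_iff] at hin
    rcases hin with hin | hin | hin
    · cases hw <;> simp [List.prefix_cons_iff] at hin <;> grind
    · cases hw <;> simp [List.prefix_cons_iff] at hin <;> grind
    · exact hX' w hw hin

lemma halts_of_avoid (st : ℕ × ℕ → Option (ℕ × ℕ)) (n : ℕ) : ∀ (X : List ℕ), X.length ≤ n →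
    ∀ c : ℕ × ℕ, (∀ w, Sem st w → ¬ w <:+: (2 * c.1 + 2) :: (2 * c.2 + 1) :: (X ++ [0])) →
    (StateTransition.eval st c).Dom := by
  induction n with
  | zero =>
    intro X hX c hc
    obtain rfl : X = [] := by simpa using hX
    rcases hs : st c with _ | c'
    · exact Part.dom_iff_mem.2 ⟨c, StateTransition.mem_eval.2 ⟨Relation.ReflTransGen.refl, hs⟩⟩
    · exact absurd (List.infix_refl _) (hc _ (Sem.e3 c.1 c.2 c' hs))
  | succ n ih =>
    intro X hX c hc
    rcases hs : st c with _ | c'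
    · exact Part.dom_iff_mem.2 ⟨c, StateTransition.mem_eval.2 ⟨Relation.ReflTransGen.refl, hs⟩⟩
    rw [StateTransition.reaches_eval (Relation.ReflTransGen.single (show c' ∈ st c from hs))]
    rcases X with _ | ⟨z, X⟩
    · exact absurd (List.infix_refl _) (hc _ (Sem.e3 c.1 c.2 c' hs))
    have hz : ∃ p, z = 2 * p + 2 := by
      rcases Nat.eq_zero_or_pos z with rfl | hz
      · exact absurd ⟨[], X ++ [0], by simp⟩ (hc _ (Sem.e3 c.1 c.2 c' hs))
      rcases Nat.even_or_odd' z with ⟨m, hm | hm⟩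
      · exact ⟨m - 1, by omega⟩
      · exact absurd ⟨[2 * c.1 + 2], X ++ [0], by simp [hm]⟩ (hc _ (Sem.e2 c.2 m))
    obtain ⟨p, rfl⟩ := hz
    have hp : p = c'.1 := by
      by_contra hp
      exact absurd ⟨[], X ++ [0], by simp⟩ (hc _ (Sem.e4 c.1 c.2 c' p hs hp))
    subst hp
    rcases X with _ | ⟨z, X⟩
    · exact absurd ⟨[2 * c.1 + 2, 2 * c.2 + 1], [], by simp⟩ (hc _ (Sem.e1 c'.1 0))
    rcases Nat.even_or_odd' z with ⟨m, hm | hm⟩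
    · exact absurd ⟨[2 * c.1 + 2, 2 * c.2 + 1], X ++ [0], by simp [hm]⟩ (hc _ (Sem.e1 c'.1 m))
    subst hm
    have hp : m = c'.2 := by
      by_contra hp
      exact absurd ⟨[], X ++ [0], by simp⟩ (hc _ (Sem.e5 c.1 c.2 c' m hs hp))
    subst hp
    apply ih X (by simp at hX; omega)
    intro w hw hin
    apply hc w hw
    simp only [List.cons_append]
    exact List.infix_cons (List.infix_cons hin)

/-! ### Words coding lists of numbers -/

section words
variable {σ : Type} (o h : σ)

def fm (ns : List ℕ) : List σ := ns.flatMap fun n => List.replicate n o ++ [h]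

@[simp] lemma fm_nil : fm o h [] = [] := rfl
@[simp] lemma fm_cons (n : ℕ) (ns : List ℕ) :
    fm o h (n :: ns) = List.replicate n o ++ h :: fm o h ns := by simp [fm]
@[simp] lemma fm_append (a b : List ℕ) : fm o h (a ++ b) = fm o h a ++ fm o h b := by simp [fm]

variable {o h}

lemma rep_cancel (hne : o ≠ h) : ∀ (a b : ℕ) (u u' : List σ),
    List.replicate a o ++ h :: u = List.replicate b o ++ h :: u' → a = b ∧ u = u' := by
  intro a
  induction a with
  | zero =>
    intro b u u' e
    cases b with
    | zero => simpa using e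
    | succ b => simp [List.replicate_succ, hne.symm] at e
  | succ a ih =>
    intro b u u' e
    cases b with
    | zero => simp [List.replicate_succ, hne] at e
    | succ b =>
      simp only [List.replicate_succ, List.cons_append, List.cons.injEq, true_and] at e
      have := ih b u u' e
      simpa using this

lemma rep_split (hne : o ≠ h) : ∀ (n : ℕ) (r u u' : List σ),
    r ++ h :: u = List.replicate n o ++ u' →
      ∃ r', r = List.replicate n o ++ r' ∧ r' ++ h :: u = u' := by
  intro n
  induction n with
  | zero => intro r u u' e; exact ⟨r, by simp, by simpa using e⟩
  | succ n ih =>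
    intro r u u' e
    rcases r with _ | ⟨a, r⟩
    · simp [List.replicate_succ, hne.symm] at e
    · simp only [List.replicate_succ, List.cons_append, List.cons.injEq] at e
      obtain ⟨rfl, e⟩ := e
      obtain ⟨r', rfl, e'⟩ := ih r u u' e
      exact ⟨r', by simp [List.replicate_succ], e'⟩

lemma fm_start (hne : o ≠ h) : ∀ (w ns : List ℕ) (s : List σ),
    fm o h w ++ s = fm o h ns → w <+: ns := by
  intro w
  induction w with
  | nil => intro ns s _; exact ⟨ns, rfl⟩
  | cons n w ih =>
    intro ns s e
    rcases ns with _ | ⟨m, ns⟩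
    · simp at e
    · simp only [fm_cons, List.append_assoc, List.cons_append] at e
      obtain ⟨rfl, e1⟩ := rep_cancel hne _ _ _ _ e
      exact (List.prefix_cons_inj _).2 (ih ns s e1)

lemma fm_factor (hne : o ≠ h) (w : List ℕ) (hw : w ≠ []) (s : List σ) :
    ∀ (ns : List ℕ) (r : List σ),
    r ++ (h :: fm o h w) ++ s = h :: fm o h ns → w <:+: ns := by
  intro ns
  induction ns with
  | nil =>
    intro r e
    have := congrArg List.length e
    rcases w with _ | ⟨n, w⟩
    · exact absurd rfl hw
    · simp at this; omega
  | cons n ns ih =>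
    intro r e
    rcases r with _ | ⟨a, r⟩
    · simp only [List.nil_append, List.cons_append, List.cons.injEq, true_and] at e
      exact (fm_start hne _ _ _ e).isInfix
    · simp only [List.cons_append, List.append_assoc, List.cons.injEq, fm_cons] at e
      obtain ⟨r', rfl, e'⟩ := rep_split hne _ _ _ _ e.2
      exact List.infix_cons (ih r' (by simpa using e'))

lemma fm_last (a : List ℕ) : ∃ r : List σ, h :: fm o h a = r ++ [h] := by
  rcases List.eq_nil_or_concat a with rfl | ⟨a, n, rfl⟩
  · exact ⟨[], rfl⟩
  · exact ⟨h :: (fm o h a ++ List.replicate n o), by simp⟩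

lemma infix_fm {w ns : List ℕ} (hi : w <:+: ns) :
    ∃ r s : List σ, h :: fm o h ns = r ++ (h :: fm o h w) ++ s := by
  obtain ⟨a, b, rfl⟩ := hi
  obtain ⟨r, hr⟩ := fm_last (o := o) (h := h) a
  refine ⟨r, fm o h b, ?_⟩
  simp only [fm_append, ← List.cons_append, hr]
  simp

lemma exists_fm : ∀ (x : List σ), (∀ a ∈ x, a = o ∨ a = h) → ∃ ms, x ++ [h] = fm o h ms := by
  intro x
  induction x with
  | nil => intro _; exact ⟨[0], rfl⟩
  | cons a x ih =>
    intro hx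
    simp only [List.forall_mem_cons] at hx
    obtain ⟨ms, hms⟩ := ih hx.2
    rcases hx.1 with rfl | rfl
    · rcases ms with _ | ⟨m, ms⟩
      · simp at hms
      · exact ⟨(m + 1) :: ms, by simp [hms, List.replicate_succ]⟩
    · exact ⟨0 :: ms, by simp [hms]⟩

lemma mem_fm {ns : List ℕ} {a : σ} (ha : a ∈ fm o h ns) : a = o ∨ a = h := by
  simp only [fm, List.mem_flatMap, List.mem_append, List.mem_replicate, List.mem_singleton] at ha
  grind

end words

/-! ### The pattern gadget -/

section gadget
variable {σ : Type}

lemma applySub_append (s : ℕ → List σ) (p q : Pattern σ) :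
    applySub s (p ++ q) = applySub s p ++ applySub s q := by
  induction p with
  | nil => rfl
  | cons c p ih => simp [applySub, ih]

@[simp] lemma applySub_nil (s : ℕ → List σ) : applySub s [] = [] := rfl
@[simp] lemma applySub_inl (s : ℕ → List σ) (a : σ) (p : Pattern σ) :
    applySub s (Sum.inl a :: p) = a :: applySub s p := rfl
@[simp] lemma applySub_inr (s : ℕ → List σ) (n : ℕ) (p : Pattern σ) :
    applySub s (Sum.inr n :: p) = s n ++ applySub s p := rfl

lemma applySub_flatMap {ι : Type} (s : ℕ → List σ) (l : List ι) (f : ι → Pattern σ) :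
    applySub s (l.flatMap f) = l.flatMap fun i => applySub s (f i) := by
  induction l with
  | nil => rfl
  | cons c p ih => simp [applySub_append, ih]

lemma applySub_const (s : ℕ → List σ) (w : List σ) : applySub s (w.map Sum.inl) = w := by
  induction w with
  | nil => rfl
  | cons c p ih => simp [ih]

def vv (o h : σ) : List σ := [o, h, h, h, h, o]

def K (u : List σ) (s : List (List σ)) : List σ := u ++ s.flatMap (· ++ u)

lemma K_cons (u : List σ) (a : List σ) (s : List (List σ)) :
    K u (a :: s) = u ++ (a ++ K u s) := by simp [K]

lemma K_nil_word : ∀ s : List (List σ), (∀ a ∈ s, a = []) → K [] s = [] := by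
  intro s hs
  simpa [K] using hs

variable {o h : σ}

lemma infix_split {p : List σ} (hp : ∀ a ∈ p, a ≠ o) : ∀ {u w : List σ}, p <:+: u ++ o :: w →
    p <:+: u ∨ p <:+: w := by
  intro u
  induction u with
  | nil =>
    intro w hi
    rw [List.nil_append, List.infix_cons_iff] at hi
    rcases hi with hi | hi
    · rcases p with _ | ⟨a, p⟩
      · left; exact List.infix_rfl
      · rw [List.cons_prefix_cons] at hi
        exact absurd hi.1 (hp a (by simp))
    · exact Or.inr hi
  | cons b u ih =>
    intro w hi
    rw [List.cons_append, List.infix_cons_iff] at hi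
    rcases hi with hi | hi
    · rcases (List.prefix_append_right_inj (l₁ := p) []).1 (by simpa using hi) with ⟨t, ht⟩
      rw [← List.cons_append] at ht
      rcases List.append_eq_append_iff.1 ht with ⟨c, hc, hd⟩ | ⟨c, hc, hd⟩
      · left; rw [hc]; exact (List.prefix_append _ _).isInfix
      · rcases c with _ | ⟨x, c⟩
        · left; rw [hc, List.append_nil]
        · simp only [List.cons_append, List.cons.injEq] at hd
          refine absurd hd.1.symm (hp x ?_)
          rw [hc]
          simp
    · rcases ih hi with hi | hi
      · exact Or.inl (List.infix_cons hi)
      · exact Or.inr hi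

def NoH (h : σ) (k : ℕ) (w : List σ) : Prop := ¬ List.replicate k h <:+: w

lemma NoH.of_sub {k : ℕ} {w w' : List σ} (hw : NoH h k w) (hi : w' <:+: w) : NoH h k w' :=
  fun hh => hw (hh.trans hi)

lemma NoH.split {k : ℕ} (hne : o ≠ h) {u w : List σ} (hu : NoH h k u) (hw : NoH h k w) :
    NoH h k (u ++ o :: w) := by
  intro hi
  rcases infix_split (o := o) (by intro a ha; rw [List.eq_of_mem_replicate ha]; exact hne.symm) hi
    with hi | hi
  · exact hu hi
  · exact hw hi

lemma NoH.short {k : ℕ} {w : List σ} (hw : w.length < k) : NoH h k w := by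
  intro hi
  have := hi.length_le
  simp at this; omega

lemma NoH.mono {k l : ℕ} (hkl : k ≤ l) {w : List σ} (hw : NoH h k w) : NoH h l w := by
  intro hi
  refine hw (List.IsInfix.trans ?_ hi)
  obtain ⟨m, rfl⟩ := Nat.exists_eq_add_of_le hkl
  rw [List.replicate_add]
  exact (List.prefix_append _ _).isInfix

lemma noH_K (hne : o ≠ h) : ∀ s : List (List σ), (∀ a ∈ s, NoH h 4 a) → NoH h 5 (K (vv o h) s) := by
  intro s
  induction s with
  | nil =>
    intro _
    have e : K (vv o h) [] = [] ++ o :: ([h, h, h, h] ++ o :: []) := by simp [K, vv]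
    rw [e]
    exact (NoH.short (by simp)).split hne ((NoH.short (by simp)).split hne (NoH.short (by simp)))
  | cons a s ih =>
    intro hs
    simp only [List.forall_mem_cons] at hs
    obtain ⟨r, hr⟩ : ∃ r, K (vv o h) s = o :: r := ⟨_, rfl⟩
    have h5 := ih hs.2
    rw [hr] at h5
    have e : K (vv o h) (a :: s) = [] ++ o :: ([h, h, h, h] ++ o :: (a ++ o :: r)) := by
      rw [K_cons, hr]; simp [vv]
    rw [e]
    refine (NoH.short (by simp)).split hne ((NoH.short (by simp)).split hne ?_)
    exact (hs.1.mono (by omega)).split hne (h5.of_sub (List.suffix_cons _ _).isInfix)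

lemma marker (hne : o ≠ h) (A B r : List σ) (hr : NoH h 5 (o :: r))
    (e : A ++ (List.replicate 5 h ++ B) =
      vv o h ++ (vv o h ++ (List.replicate 5 h ++ (o :: r)))) :
    A = vv o h ++ vv o h ∧ B = o :: r := by
  have h1 := hne.symm
  simp only [vv, List.replicate, List.cons_append, List.nil_append] at e ⊢
  iterate 12
    rcases A with _ | ⟨a, A⟩
    · simp [h1] at e
    simp only [List.cons_append, List.cons.injEq] at e
    obtain ⟨rfl, e⟩ := e
  rcases A with _ | ⟨a, A⟩
  · simpa using e
  exfalso
  simp only [List.cons_append, List.cons.injEq] at e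
  obtain ⟨rfl, e⟩ := e
  iterate 4
    rcases A with _ | ⟨a, A⟩
    · simp [h1] at e
    simp only [List.cons_append, List.cons.injEq] at e
    obtain ⟨-, e⟩ := e
  apply hr
  exact ⟨A, B, by simpa [List.replicate] using e⟩

lemma square_split (hne : o ≠ h) (X : ℕ → List σ) : ∀ L : List ℕ, L.Nodup →
    (L.flatMap fun i => X i ++ X i) = vv o h ++ vv o h →
    ∃ i ∈ L, X i = vv o h ∧ ∀ j ∈ L, j ≠ i → X j = [] := by
  intro L
  induction L with
  | nil => intro _ e; simp [vv] at e
  | cons i L ih =>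
    intro hn e
    rw [List.nodup_cons] at hn
    rw [List.flatMap_cons] at e
    by_cases hi : X i = []
    · rw [hi, List.nil_append, List.nil_append] at e
      obtain ⟨j, hj, hX, hr⟩ := ih hn.2 e
      refine ⟨j, List.mem_cons_of_mem _ hj, hX, ?_⟩
      intro k hk hkj
      rcases List.mem_cons.1 hk with rfl | hk
      · exact hi
      · exact hr k hk hkj
    · have key : ∀ x R : List σ, x ≠ [] → x ++ x ++ R = vv o h ++ vv o h → x = vv o h ∧ R = [] := by
        have h1 := hne.symm
        intro x R hx e
        have hl := congrArg List.length e
        rcases x with _ | ⟨a1, _ | ⟨a2, _ | ⟨a3, _ | ⟨a4, _ | ⟨a5, _ | ⟨a6, _ | ⟨a7, x⟩⟩⟩⟩⟩⟩⟩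
        · exact absurd rfl hx
        all_goals simp [vv] at e hl ⊢
        all_goals first | omega | grind
      obtain ⟨h1, h2⟩ := key _ _ hi e
      refine ⟨i, by simp, h1, ?_⟩
      intro j hj hji
      rcases List.mem_cons.1 hj with rfl | hj
      · exact absurd rfl hji
      · rw [List.flatMap_eq_nil_iff] at h2
        exact (List.append_eq_nil_iff.1 (h2 j hj)).1

lemma four_false (hne : o ≠ h) (s0 w w' : List σ) (hs : NoH h 4 s0)
    (e : h :: h :: h :: h :: w = s0 ++ o :: w') : False := by
  have h1 := hne.symm
  iterate 4
    rcases s0 with _ | ⟨a, s0⟩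
    · simp [h1] at e
    simp only [List.cons_append, List.cons.injEq] at e
    obtain ⟨rfl, e⟩ := e
  exact hs ⟨[], s0, by simp [List.replicate]⟩

lemma vr_false (hne : o ≠ h) (r w w' : List σ) (hr : r ≠ []) (hs : NoH h 4 r)
    (e : vv o h ++ w = r ++ (vv o h ++ w')) : False := by
  rcases r with _ | ⟨a, r⟩
  · exact hr rfl
  simp only [vv, List.cons_append, List.cons.injEq, List.nil_append] at e
  exact four_false hne r _ _ (hs.of_sub (List.suffix_cons _ _).isInfix) e.2

lemma v_split (hne : o ≠ h) (pre w w' s0 : List σ) (hs : NoH h 4 s0)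
    (e : pre ++ (vv o h ++ w) = vv o h ++ (s0 ++ (vv o h ++ w'))) :
    pre = [] ∨ ∃ pre', pre = vv o h ++ (s0 ++ pre') := by
  rcases List.append_eq_append_iff.1 e with ⟨c, hc, hd⟩ | ⟨c, hc, hd⟩
  · have h1 := hne.symm
    rcases pre with _ | ⟨a1, _ | ⟨a2, _ | ⟨a3, _ | ⟨a4, _ | ⟨a5, _ | ⟨a6, pre⟩⟩⟩⟩⟩⟩
    · exact Or.inl rfl
    · exfalso; simp [vv] at e; grind
    · exfalso; simp [vv] at e; grind
    · exfalso; simp [vv] at e; grind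
    · exfalso; simp [vv] at e; grind
    · exfalso
      simp only [vv, List.cons_append, List.cons.injEq, List.nil_append, true_and] at e
      exact four_false hne s0 _ _ hs e.2.2.2.2.2
    · simp only [vv, List.cons_append, List.cons.injEq] at hc
      have h7 := hc.2.2.2.2.2.2
      have : pre = [] := by
        have := congrArg List.length h7
        simp at this
        exact List.eq_nil_of_length_eq_zero (by omega)
      subst this
      rcases s0 with _ | ⟨b, s0⟩
      · right; exact ⟨[], by simp [vv]; grind⟩
      · exfalso
        simp only [vv, List.cons_append, List.cons.injEq, List.nil_append] at e
        exact vr_false hne (b :: s0) w w' (by simp) hs (by simpa [vv] using e.2.2.2.2.2.2)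
  · rcases List.append_eq_append_iff.1 hd with ⟨d, hd1, hd2⟩ | ⟨d, hd1, hd2⟩
    · right; exact ⟨d, by rw [hc, hd1]⟩
    · rcases d with _ | ⟨x, d⟩
      · right; exact ⟨[], by rw [hc, hd1]; simp⟩
      · exfalso
        exact vr_false hne (x :: d) w w' (by simp)
          (hs.of_sub ⟨c, [], by rw [hd1]; simp⟩) hd2

lemma K_length (u : List σ) (s : List (List σ)) :
    u.length * (s.length + 1) ≤ (K u s).length := by
  induction s with
  | nil => simp [K]
  | cons a s ih =>
    rw [K_cons]; simp only [List.length_append, List.length_cons]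
    nlinarith

lemma K_unique (hne : o ≠ h) : ∀ (s : List (List σ)), (∀ a ∈ s, NoH h 4 a) →
    ∀ (G : List (List σ)) (pre post : List σ), s.length ≤ G.length →
    pre ++ (K (vv o h) G ++ post) = K (vv o h) s → G = s ∧ pre = [] ∧ post = [] := by
  intro s
  induction s with
  | nil =>
    intro _ G pre post hl e
    have e1 := congrArg List.length e
    have e2 := K_length (vv o h) G
    have e3 : (vv o h).length = 6 := rfl
    rw [e3] at e2
    simp only [K, List.length_append, List.flatMap_nil, List.length_nil] at e1 e2
    refine ⟨List.eq_nil_of_length_eq_zero (by omega), List.eq_nil_of_length_eq_zero (by omega),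
      List.eq_nil_of_length_eq_zero (by omega)⟩
  | cons a s ih =>
    intro hs G pre post hl e
    simp only [List.forall_mem_cons] at hs
    rcases G with _ | ⟨g, G⟩
    · simp at hl
    simp only [List.length_cons] at hl
    have hK : ∀ s : List (List σ), ∃ w, K (vv o h) s = vv o h ++ w := fun s => ⟨_, rfl⟩
    obtain ⟨w, hw⟩ := hK s
    have e0 := e
    rw [K_cons, K_cons, hw, List.append_assoc] at e
    rcases v_split hne _ _ _ _ hs.1 e with hp | ⟨pre', hp⟩
    · subst hp
      rw [List.nil_append, List.append_cancel_left_eq, ← hw, List.append_assoc] at e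
      rcases List.append_eq_append_iff.1 e with ⟨c, hc, hd⟩ | ⟨c, hc, hd⟩
      · rcases c with _ | ⟨x, c⟩
        · obtain ⟨h1, -, h2⟩ := ih hs.2 G [] post (by omega) (by simpa using hd)
          subst hc
          exact ⟨by rw [h1]; simp, rfl, h2⟩
        · exfalso
          obtain ⟨w2, hw2⟩ := hK G
          rw [hw, hw2, List.append_assoc] at hd
          exact vr_false hne (x :: c) _ _ (by simp) (hs.1.of_sub ⟨g, [], by rw [hc]; simp⟩) hd
      · obtain ⟨h1, h2, h3⟩ := ih hs.2 G c post (by omega) hd.symm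
        subst h2
        exact ⟨by rw [hc, h1]; simp, rfl, h3⟩
    · exfalso
      rw [hp, K_cons (vv o h) a s, List.append_assoc, List.append_assoc,
        List.append_cancel_left_eq, List.append_cancel_left_eq] at e0
      obtain ⟨h1, -, -⟩ := ih hs.2 (g :: G) pre' post (by simp; omega) e0
      have := congrArg List.length h1
      simp at this; omega

lemma range_single {f : ℕ → List σ} {N i : ℕ} (hi : i < N) (hf : ∀ j < N, j ≠ i → f j = []) :
    (List.range N).flatMap f = f i := by
  obtain ⟨l1, l2, hl⟩ := List.append_of_mem (List.mem_range.2 hi)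
  have hn : (List.range N).Nodup := List.nodup_range
  have hm : ∀ j ∈ List.range N, j < N := fun j hj => List.mem_range.1 hj
  rw [hl] at hn hm ⊢
  have h1 : l1.flatMap f = [] := by
    rw [List.flatMap_eq_nil_iff]
    intro j hj
    refine hf j (hm j (by simp [hj])) ?_
    rintro rfl
    simp [List.nodup_append] at hn
    grind
  have h2 : l2.flatMap f = [] := by
    rw [List.flatMap_eq_nil_iff]
    intro j hj
    refine hf j (hm j (by simp [hj])) ?_
    rintro rfl
    simp [List.nodup_append] at hn
    grind
  simp [h1, h2]

variable [Encodable σ]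

def enc (x : ℕ × Option (σ ⊕ ℕ)) : ℕ := Encodable.encode x

def ren (i : ℕ) (z : σ ⊕ ℕ) : σ ⊕ ℕ := Sum.inr (enc (i, some z))

def group (i : ℕ) (G : List (Pattern σ)) : Pattern σ :=
  Sum.inr (enc (σ := σ) (i, none)) ::
    G.flatMap fun g => g.map (ren i) ++ [Sum.inr (enc (σ := σ) (i, none))]

/-- The right-hand pattern. -/
def beta (h : σ) (lt : List σ) (N : ℕ) (T : ℕ → List (Pattern σ)) : Pattern σ :=
  ((List.range N).flatMap fun i =>
    [Sum.inr (enc (σ := σ) (i, none)), Sum.inr (enc (σ := σ) (i, none))]) ++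
  ((List.replicate 5 h).map Sum.inl ++
  (List.range N).flatMap fun i => group i (T i ++ lt.map fun c => [Sum.inl c]))

def target (o h : σ) (lt : List σ) (W Y : List σ) : List σ :=
  vv o h ++ (vv o h ++ (List.replicate 5 h ++ K (vv o h) ([W, Y] ++ lt.map fun c => [c])))

lemma applySub_group (s : ℕ → List σ) (i : ℕ) (G : List (Pattern σ)) :
    applySub s (group i G) = K (s (enc (σ := σ) (i, none)))
      (G.map fun g => applySub s (g.map (ren i))) := by
  simp only [group, K, applySub_inr, applySub_flatMap, applySub_append, List.flatMap_map,
    applySub_nil, List.append_nil]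

lemma applySub_beta (s : ℕ → List σ) (lt : List σ) (N : ℕ) (T : ℕ → List (Pattern σ)) :
    applySub s (beta h lt N T) =
      ((List.range N).flatMap fun i =>
        s (enc (σ := σ) (i, none)) ++ s (enc (σ := σ) (i, none))) ++
      (List.replicate 5 h ++ (List.range N).flatMap fun i =>
        K (s (enc (σ := σ) (i, none)))
          ((T i ++ lt.map fun c => [Sum.inl c]).map fun g : Pattern σ => applySub s (g.map (ren i)))) := by
  simp only [beta, applySub_append, applySub_flatMap, applySub_group, applySub_const,
    applySub_inr, applySub_nil, List.append_nil]

def gval (o h : σ) (i0 : ℕ) (τ : ℕ → List σ) : ℕ × Option (σ ⊕ ℕ) → List σ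
  | (i, none) => if i = i0 then vv o h else []
  | (i, some (Sum.inl c)) => if i = i0 then [c] else []
  | (i, some (Sum.inr k)) => if i = i0 then τ k else []

def gsub (o h : σ) (i0 : ℕ) (τ : ℕ → List σ) (n : ℕ) : List σ :=
  ((Encodable.decode n : Option (ℕ × Option (σ ⊕ ℕ))).map (gval o h i0 τ)).getD []

lemma gsub_enc (i0 : ℕ) (τ : ℕ → List σ) (x : ℕ × Option (σ ⊕ ℕ)) :
    gsub o h i0 τ (enc x) = gval o h i0 τ x := by
  rw [gsub, enc, Encodable.encodek]; rfl

lemma gsub_same (i0 : ℕ) (τ : ℕ → List σ) (g : Pattern σ) :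
    applySub (gsub o h i0 τ) (g.map (ren i0)) = applySub τ g := by
  induction g with
  | nil => rfl
  | cons z g ih =>
    rcases z with c | k
    · simp [ren, ih, gsub_enc, gval]
    · simp [ren, ih, gsub_enc, gval]

lemma gsub_other (i0 i : ℕ) (hi : i ≠ i0) (τ : ℕ → List σ) (g : Pattern σ) :
    applySub (gsub o h i0 τ) (g.map (ren i)) = [] := by
  induction g with
  | nil => rfl
  | cons z g ih =>
    rcases z with c | k
    · simp [ren, gsub_enc, gval, hi, ih]
    · simp [ren, gsub_enc, gval, hi, ih]

lemma target_mem (lt : List σ) (N : ℕ) (T : ℕ → List (Pattern σ)) (W Y : List σ) (i : ℕ)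
    (hi : i < N) (τ : ℕ → List σ) (hτ : (T i).map (applySub τ) = [W, Y]) :
    target o h lt W Y ∈ LangE (beta h lt N T) := by
  refine ⟨gsub o h i τ, ?_⟩
  have e1 : ∀ j, j ≠ i → gsub o h i τ (enc (σ := σ) (j, none)) = [] := by
    intro j hj; simp [gsub_enc, gval, hj]
  have e2 : gsub o h i τ (enc (σ := σ) (i, none)) = vv o h := by simp [gsub_enc, gval]
  rw [applySub_beta, range_single hi, range_single hi]
  · simp only [e2, gsub_same, List.map_append, hτ, List.map_map]
    simp [target, Function.comp_def]
  · intro j _ hj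
    rw [e1 j hj]
    apply K_nil_word
    intro a ha
    obtain ⟨g, _, rfl⟩ := List.mem_map.1 ha
    exact gsub_other _ _ hj _ _
  · intro j _ hj
    rw [e1 j hj]; rfl

lemma match_of_target (hne : o ≠ h) (lt : List σ) (hlt : ∀ c, c ∈ lt) (N : ℕ)
    (T : ℕ → List (Pattern σ))
    (hT : ∀ i, (T i).length = 2) (W Y : List σ) (hW : NoH h 4 W) (hY : NoH h 4 Y)
    (hm : target o h lt W Y ∈ LangE (beta h lt N T)) :
    ∃ i < N, ∃ τ : ℕ → List σ, (T i).map (applySub τ) = [W, Y] := by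
  obtain ⟨s, hs⟩ := hm
  rw [applySub_beta] at hs
  have hall : ∀ a ∈ [W, Y] ++ lt.map (fun c => [c]), NoH h 4 a := by
    intro a ha
    simp only [List.mem_append, List.mem_cons, List.not_mem_nil, or_false, List.mem_map] at ha
    rcases ha with (rfl | rfl) | ⟨c, _, rfl⟩
    · exact hW
    · exact hY
    · exact NoH.short (by simp)
  obtain ⟨h1, h2⟩ := marker hne _ _ _ (noH_K hne _ hall) hs
  obtain ⟨i, hi, hX, hO⟩ := square_split hne (fun i => s (enc (σ := σ) (i, none))) _
    List.nodup_range h1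
  obtain ⟨l1, l2, hl⟩ := List.append_of_mem hi
  rw [hl, List.flatMap_append, List.flatMap_cons] at h2
  rw [hX] at h2
  obtain ⟨h3, -, -⟩ := K_unique hne _ hall _ _ _ (by simp [hT]; omega) h2
  rw [List.map_append] at h3
  obtain ⟨h4, h5⟩ := List.append_inj h3 (by simp [hT])
  refine ⟨i, List.mem_range.1 hi, fun k => s (enc (σ := σ) (i, some (Sum.inr k))), ?_⟩
  rw [← h4]
  have hc : ∀ c, s (enc (i, some (Sum.inl c))) = [c] := by
    intro c
    rw [List.map_map, List.map_inj_left] at h5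
    simpa [ren] using h5 c (hlt c)
  apply List.map_congr_left
  intro g hg
  clear hg
  induction g with
  | nil => rfl
  | cons z g ih =>
    rcases z with c | k
    · simp [ren, ih, hc]
    · simp [ren, ih]

end gadget

/-! ### The templates -/

section templates
variable {σ : Type}

def pw (o : σ) (r : Row) : Pattern σ :=
  List.replicate r.1 (Sum.inl o) ++ (List.replicate r.2.1 (Sum.inr 3) ++
    (List.replicate r.2.2.1 (Sum.inr 4) ++ List.replicate r.2.2.2 (Sum.inr 5)))

def winPat (o h : σ) (win : List Row) : Pattern σ :=
  Sum.inl h :: win.flatMap fun r => pw o r ++ [Sum.inl h]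

def TL (o h : σ) (oth : List σ) (wins : List (List Row)) : List (List (Pattern σ)) :=
  oth.map (fun c => [[Sum.inr 0, Sum.inl c, Sum.inr 1], [Sum.inr 2]]) ++
  ((h :: oth).map (fun c => [[Sum.inr 2], [Sum.inr 0, Sum.inl c, Sum.inr 1]]) ++
  ([[[Sum.inr 0, Sum.inr 2, Sum.inr 1], [Sum.inr 2, Sum.inr 2, Sum.inr 2]]] ++
  wins.map (fun win => [Sum.inr 0 :: (winPat o h win ++ [Sum.inr 1]),
    [Sum.inr 3, Sum.inr 4, Sum.inr 5, Sum.inr 2]])))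

lemma TL_length {o h : σ} {oth : List σ} {wins : List (List Row)} {g : List (Pattern σ)}
    (hg : g ∈ TL o h oth wins) : g.length = 2 := by
  simp only [TL, List.mem_append, List.mem_map, List.mem_singleton] at hg
  rcases hg with ⟨_, _, rfl⟩ | ⟨_, _, rfl⟩ | rfl | ⟨_, _, rfl⟩ <;> rfl

lemma applySub_rep_inl (τ : ℕ → List σ) (o : σ) (n : ℕ) :
    applySub τ (List.replicate n (Sum.inl o)) = List.replicate n o := by
  induction n with
  | zero => rfl
  | succ n ih => simp [List.replicate_succ, ih]

lemma applySub_rep_inr (τ : ℕ → List σ) (o : σ) (k m : ℕ) (hk : τ k = List.replicate m o) (n : ℕ) :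
    applySub τ (List.replicate n (Sum.inr k)) = List.replicate (n * m) o := by
  induction n with
  | zero => simp
  | succ n ih =>
    rw [List.replicate_succ, applySub_inr, ih, hk, ← List.replicate_add]
    congr 1; ring

lemma applySub_winPat (τ : ℕ → List σ) (o h : σ) (t : ℕ → ℕ)
    (h3 : τ 3 = List.replicate (t 0) o) (h4 : τ 4 = List.replicate (t 1) o)
    (h5 : τ 5 = List.replicate (t 2) o) (win : List Row) :
    applySub τ (winPat o h win) = h :: fm o h (inst t win) := by
  have hp : ∀ r, applySub τ (pw o r) = List.replicate (rowVal t r) o := by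
    intro r
    simp only [pw, applySub_append, applySub_rep_inl, applySub_rep_inr τ o 3 _ h3,
      applySub_rep_inr τ o 4 _ h4, applySub_rep_inr τ o 5 _ h5, ← List.replicate_add]
    congr 1
    simp only [rowVal]; ring
  simp only [winPat, applySub_inl, applySub_flatMap, applySub_append, hp, fm, inst,
    List.flatMap_map, applySub_nil]

def Matches (L : List (List (Pattern σ))) (W Y : List σ) : Prop :=
  ∃ g ∈ L, ∃ τ : ℕ → List σ, g.map (applySub τ) = [W, Y]

def slotW (o h : σ) (n0 n1 : ℕ) (x : List σ) : List σ :=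
  h :: (List.replicate n0 o ++ h :: (List.replicate n1 o ++ h :: (x ++ [h, h])))

variable {o h : σ}

lemma slotW_eq {n0 n1 : ℕ} {x : List σ} {ms : List ℕ} (hx : x ++ [h] = fm o h ms) :
    slotW o h n0 n1 x = h :: fm o h (n0 :: n1 :: (ms ++ [0])) := by
  have : x ++ [h, h] = (x ++ [h]) ++ [h] := by simp
  rw [slotW, this, hx]
  simp

def tsub (l : List (List σ)) (n : ℕ) : List σ := l.getD n []

lemma halts_of_unmatched {mA mB : ℕ} {T : ℕ → ℕ → Option (ℕ × ℕ × ℕ × ℕ)}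
    (hA : 0 < mA) (hB : 0 < mB) (oth : List σ)
    (hoth : ∀ c, c ≠ o → c ≠ h → c ∈ oth) (A B : ℕ) (x y : List σ)
    (hm : ¬ Matches (TL o h oth (allWins mA mB T)) (slotW o h (2 * A + 2) (2 * B + 1) x)
      (y ++ (y ++ y))) : (StateTransition.eval (cstep mA mB T) (A, B)).Dom := by
  set W := slotW o h (2 * A + 2) (2 * B + 1) x with hW
  have hy : ∀ c ∈ y, c = o := by
    intro c hc
    by_contra hco
    apply hm
    have hc' : c ∈ h :: oth := by
      by_cases hch : c = h
      · simp [hch]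
      · exact List.mem_cons_of_mem _ (hoth c hco hch)
    obtain ⟨a, b, hab⟩ := List.append_of_mem (show c ∈ y ++ (y ++ y) by simp [hc])
    refine ⟨[[Sum.inr 2], [Sum.inr 0, Sum.inl c, Sum.inr 1]], ?_, tsub [a, b, W], ?_⟩
    · simp only [TL, List.mem_append, List.mem_map]
      exact Or.inr (Or.inl ⟨c, hc', rfl⟩)
    · rw [hab]; simp [tsub]
  have hx : ∀ c ∈ x, c = o ∨ c = h := by
    intro c hc
    by_contra hco
    rw [not_or] at hco
    apply hm
    have hcW : c ∈ W := by simp [hW, slotW, hc]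
    obtain ⟨a, b, hab⟩ := List.append_of_mem hcW
    refine ⟨[[Sum.inr 0, Sum.inl c, Sum.inr 1], [Sum.inr 2]], ?_, tsub [a, b, y ++ (y ++ y)], ?_⟩
    · simp only [TL, List.mem_append, List.mem_map]
      exact Or.inl ⟨c, hoth c hco.1 hco.2, rfl⟩
    · rw [hab]; simp [tsub]
  obtain ⟨k, rfl⟩ : ∃ k, y = List.replicate k o := ⟨y.length, List.eq_replicate_of_mem hy⟩
  obtain ⟨ms, hms⟩ := exists_fm x hx
  have hWe := slotW_eq (n0 := 2 * A + 2) (n1 := 2 * B + 1) hms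
  rw [← hW] at hWe
  refine halts_of_avoid _ ms.length ms le_rfl (A, B) ?_
  intro w hw hin
  have hlt : ∀ n ∈ w, n < k := by
    intro n hn
    by_contra hnk
    obtain ⟨a, b, hab⟩ := List.append_of_mem (hin.subset hn)
    apply hm
    refine ⟨[[Sum.inr 0, Sum.inr 2, Sum.inr 1], [Sum.inr 2, Sum.inr 2, Sum.inr 2]], by simp [TL],
      tsub [h :: fm o h a, List.replicate (n - k) o ++ h :: fm o h b, List.replicate k o], ?_⟩
    rw [hWe, hab]
    have e : List.replicate n o = List.replicate k o ++ List.replicate (n - k) o := by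
      rw [← List.replicate_add]; congr 1; omega
    simp only [List.map_cons, List.map_nil, applySub_inr, applySub_nil, fm_append, fm_cons, e]
    simp [tsub, -List.replicate_append_replicate]
  obtain ⟨win, hwin, t, ht, rfl⟩ := mem_of_sem hA hB hw k hlt
  apply hm
  obtain ⟨r, s, hrs⟩ := infix_fm (o := o) (h := h) hin
  refine ⟨[Sum.inr 0 :: (winPat o h win ++ [Sum.inr 1]),
    [Sum.inr 3, Sum.inr 4, Sum.inr 5, Sum.inr 2]], ?_,
    tsub [r, s, List.replicate (3 * k - t 0 - t 1 - t 2) o, List.replicate (t 0) o,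
      List.replicate (t 1) o, List.replicate (t 2) o], ?_⟩
  · simp only [TL, List.mem_append, List.mem_map]
    exact Or.inr (Or.inr (Or.inr ⟨win, hwin, rfl⟩))
  · rw [hWe, hrs]
    simp only [List.map_cons, List.map_nil, applySub_inr, applySub_append, applySub_nil]
    rw [applySub_winPat _ o h t (by simp [tsub]) (by simp [tsub]) (by simp [tsub])]
    have h0 := ht 0
    have h1 := ht 1
    have h2 := ht 2
    simp only [tsub, List.getD_cons_zero, List.getD_cons_succ, List.append_nil,
      ← List.replicate_add, List.append_assoc, List.cons.injEq, true_and, and_true]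
    congr 1
    omega

lemma unmatched_of_halts {mA mB : ℕ} {T : ℕ → ℕ → Option (ℕ × ℕ × ℕ × ℕ)}
    (hA : 0 < mA) (hB : 0 < mB) (hne : o ≠ h) (oth : List σ)
    (hoth : ∀ c ∈ oth, c ≠ o ∧ c ≠ h) (A B : ℕ)
    (hh : (StateTransition.eval (cstep mA mB T) (A, B)).Dom) : ∃ x y : List σ,
    NoH h 4 (slotW o h (2 * A + 2) (2 * B + 1) x) ∧ NoH h 4 (y ++ (y ++ y)) ∧
    ¬ Matches (TL o h oth (allWins mA mB T)) (slotW o h (2 * A + 2) (2 * B + 1) x)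
      (y ++ (y ++ y)) := by
  obtain ⟨X, hX, hav⟩ := exists_history _ _ hh
  obtain ⟨x, hx⟩ : ∃ x : List σ, x ++ [h] = fm o h X := by
    rcases List.eq_nil_or_concat X with rfl | ⟨a, n, rfl⟩
    · exact absurd rfl hX
    · exact ⟨fm o h a ++ List.replicate n o, by simp⟩
  set W := slotW o h (2 * A + 2) (2 * B + 1) x with hW
  have hWe := slotW_eq (n0 := 2 * A + 2) (n1 := 2 * B + 1) hx
  rw [← hW] at hWe
  have hY : ∀ k : ℕ, List.replicate k o ++ (List.replicate k o ++ List.replicate k o) =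
      List.replicate (3 * k) o := by
    intro k
    rw [← List.replicate_add, ← List.replicate_add]; congr 1; ring
  refine ⟨x, List.replicate (W.length + 1) o, ?_, ?_, ?_⟩
  · rintro ⟨r, s, hrs⟩
    refine hav _ Sem.e0 (fm_factor hne _ (by simp) s _ r ?_)
    rw [← hW, hWe] at hrs
    rw [← hrs]
    simp [List.replicate]
  · rw [hY]
    intro hi
    have := hi.subset (show h ∈ List.replicate 4 h by simp)
    exact hne (List.eq_of_mem_replicate this).symm
  · rw [← hW, hY]
    rintro ⟨g, hg, τ, hτ⟩
    simp only [TL, List.mem_append, List.mem_map, List.mem_singleton] at hg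
    rcases hg with ⟨c, hc, rfl⟩ | ⟨c, hc, rfl⟩ | rfl | ⟨win, hwin, rfl⟩
    · simp only [List.map_cons, List.map_nil, applySub_inr, applySub_inl, applySub_nil,
        List.cons.injEq, and_true] at hτ
      have : c ∈ W := by rw [← hτ.1]; simp
      rw [hWe] at this
      rcases List.mem_cons.1 this with h1 | h1
      · exact (hoth c hc).2 h1
      · rcases mem_fm h1 with h1 | h1
        · exact (hoth c hc).1 h1
        · exact (hoth c hc).2 h1
    · simp only [List.map_cons, List.map_nil, applySub_inr, applySub_inl, applySub_nil,
        List.cons.injEq, and_true] at hτ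
      have : c ∈ List.replicate (3 * (W.length + 1)) o := by rw [← hτ.2]; simp
      have := List.eq_of_mem_replicate this
      rcases List.mem_cons.1 hc with h1 | h1
      · exact hne (this.symm.trans h1)
      · exact (hoth c h1).1 this
    · simp only [List.map_cons, List.map_nil, applySub_inr, applySub_nil,
        List.cons.injEq, and_true] at hτ
      have h1 := congrArg List.length hτ.1
      have h2 := congrArg List.length hτ.2
      simp at h1 h2
      omega
    · simp only [List.map_cons, List.map_nil, applySub_inr, applySub_nil, applySub_append,
        List.cons.injEq, and_true] at hτ
      have hrep : ∀ j, (∀ a ∈ τ j, a ∈ List.replicate (3 * (W.length + 1)) o) →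
          τ j = List.replicate (τ j).length o := by
        intro j hj
        apply List.eq_replicate_of_mem
        intro a ha
        exact List.eq_of_mem_replicate (hj a ha)
      have h3 := hrep 3 (by intro a ha; rw [← hτ.2]; simp [ha])
      have h4 := hrep 4 (by intro a ha; rw [← hτ.2]; simp [ha])
      have h5 := hrep 5 (by intro a ha; rw [← hτ.2]; simp [ha])
      have h6 := applySub_winPat τ o h (par (τ 3).length (τ 4).length (τ 5).length)
        (by simpa [par] using h3) (by simpa [par] using h4) (by simpa [par] using h5) win
      rw [h6, hWe] at hτ
      refine hav _ (sem_of_mem hA hB hwin (par (τ 3).length (τ 4).length (τ 5).length))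
        (fm_factor hne _ ?_ (τ 1) _ (τ 0) ?_)
      · simpa [inst] using allWins_ne_nil hwin
      · simpa using hτ.1

def alphaL (o h : σ) (n0 : ℕ) : Pattern σ :=
  (vv o h ++ (vv o h ++ (List.replicate 5 h ++ vv o h))).map Sum.inl ++
    Sum.inl h :: (List.replicate n0 (Sum.inl o) ++ [Sum.inl h])

def alphaR (o h : σ) (lt : List σ) : Pattern σ :=
  Sum.inl h :: Sum.inr 0 :: Sum.inl h :: Sum.inl h :: ((vv o h).map Sum.inl ++
    (Sum.inr 1 :: Sum.inr 1 :: Sum.inr 1 ::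
      (K (vv o h) (lt.map fun c => [c])).map Sum.inl))

/-- The left-hand pattern. -/
def alpha (o h : σ) (lt : List σ) (n0 n1 : ℕ) : Pattern σ :=
  alphaL o h n0 ++ (List.replicate n1 (Sum.inl o) ++ alphaR o h lt)

lemma applySub_alpha [Encodable σ] (lt : List σ) (n0 n1 : ℕ) (s : ℕ → List σ) :
    applySub s (alpha o h lt n0 n1) =
      target o h lt (slotW o h n0 n1 (s 0)) (s 1 ++ (s 1 ++ s 1)) := by
  simp only [alpha, alphaL, alphaR, applySub_append, applySub_const, applySub_inl, applySub_inr,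
    applySub_rep_inl, target, slotW, List.cons_append, List.nil_append, K_cons,
    List.append_assoc]

lemma incl_iff [Encodable σ] {mA mB : ℕ} {T : ℕ → ℕ → Option (ℕ × ℕ × ℕ × ℕ)}
    (hA : 0 < mA) (hB : 0 < mB) (hne : o ≠ h) (lt oth : List σ) (hlt : ∀ c, c ∈ lt)
    (hoth : ∀ c, c ∈ oth ↔ c ≠ o ∧ c ≠ h) (A B : ℕ) :
    LangE (alpha o h lt (2 * A + 2) (2 * B + 1)) ⊆
      LangE (beta h lt (TL o h oth (allWins mA mB T)).length
        (fun i => (TL o h oth (allWins mA mB T)).getD i [[], []])) ↔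
    ¬ (StateTransition.eval (cstep mA mB T) (A, B)).Dom := by
  set L := TL o h oth (allWins mA mB T) with hL
  have hmem : ∀ i < L.length, L.getD i [[], []] ∈ L := by
    intro i hi
    rw [List.getD_eq_getElem _ _ hi]
    exact List.getElem_mem hi
  constructor
  · intro hsub hh
    obtain ⟨x, y, hx, hy, hm⟩ := unmatched_of_halts hA hB hne oth (fun c hc => (hoth c).1 hc) A B hh
    have h1 : target o h lt (slotW o h (2 * A + 2) (2 * B + 1) x) (y ++ (y ++ y)) ∈
        LangE (alpha o h lt (2 * A + 2) (2 * B + 1)) :=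
      ⟨tsub [x, y], by rw [applySub_alpha]; simp [tsub]⟩
    obtain ⟨i, hi, τ, hτ⟩ := match_of_target hne lt hlt _ _ (by
      intro i
      by_cases hi : i < L.length
      · exact TL_length (hmem i hi)
      · show (L.getD i [[], []]).length = 2
        rw [List.getD_eq_default _ _ (not_lt.1 hi)]; rfl) _ _ hx hy (hsub h1)
    exact hm ⟨_, hmem i hi, τ, hτ⟩
  · rintro hh _ ⟨s, rfl⟩
    rw [applySub_alpha]
    by_cases hm : Matches L (slotW o h (2 * A + 2) (2 * B + 1) (s 0)) (s 1 ++ (s 1 ++ s 1))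
    · obtain ⟨g, hg, τ, hτ⟩ := hm
      obtain ⟨i, hi, rfl⟩ := List.getElem_of_mem hg
      exact target_mem lt _ _ _ _ i hi τ (by rw [List.getD_eq_getElem _ _ hi]; exact hτ)
    · exact absurd (halts_of_unmatched hA hB oth (fun c h1 h2 => (hoth c).2 ⟨h1, h2⟩) A B _ _ hm) hh

lemma alpha_computable [Primcodable σ] (o h : σ) (lt : List σ) (n0 : ℕ) (B : ℕ → ℕ)
    (hB : Primrec B) (β : Pattern σ) :
    Computable fun n : ℕ => ((alpha o h lt n0 (2 * B n + 1), β) : Pattern σ × Pattern σ) := by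
  apply Primrec.to_comp
  refine Primrec.pair ?_ (Primrec.const β)
  have hr : Primrec fun n : ℕ => (List.replicate n (Sum.inl o) : Pattern σ) := by
    have : Primrec fun n : ℕ => ((fun l : Pattern σ => Sum.inl o :: l)^[n]) [] :=
      Primrec.nat_iterate Primrec.id (Primrec.const [])
        (Primrec.list_cons.comp (Primrec.const _) Primrec.snd).to₂
    refine this.of_eq fun n => ?_
    induction n with
    | zero => rfl
    | succ n ih => rw [Function.iterate_succ_apply', ih]; rfl
  have h1 : Primrec fun n : ℕ => 2 * B n + 1 :=
    Primrec.succ.comp (Primrec.nat_mul.comp (Primrec.const 2) hB)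
  exact Primrec.list_append.comp (Primrec.const _)
    (Primrec.list_append.comp (hr.comp h1) (Primrec.const _))

end templates

end PatUndec

/-- The inclusion problem for erasing pattern languages is undecidable for every
finite alphabet of size at least 2. -/
theorem inclusion_EPattern_undecidable
    (σ : Type) [Fintype σ] [Primcodable σ] (hcard : 2 ≤ Fintype.card σ) :
    ¬ ComputablePred fun inp : Pattern σ × Pattern σ => LangE inp.1 ⊆ LangE inp.2 := by
  classical
  intro hc
  obtain ⟨mA, mB, T, A0, B0, hA, hB, hB0, hu⟩ := PatUndec.exists_collatz
  obtain ⟨o, h, hne⟩ := Fintype.one_lt_card_iff.1 (show 1 < Fintype.card σ by omega)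
  have key := fun n => PatUndec.incl_iff (T := T) hA hB hne Finset.univ.toList
    (Finset.univ.toList.filter fun c => c ≠ o ∧ c ≠ h) (by simp) (by simp) A0 (B0 n)
  apply hu
  refine ComputablePred.computable_of_manyOneReducible (q := fun inp : Pattern σ × Pattern σ =>
    ¬ LangE inp.1 ⊆ LangE inp.2) ?_ hc.not
  exact ⟨_, PatUndec.alpha_computable o h _ _ B0 hB0 _, fun n => ((not_congr (key n)).trans
    not_not).symm⟩
end

section
/- The inclusion problem for non-erasing pattern languages (without constraints) is undecidable: for every finite alphabet Σ with |Σ| ≥ 2 there is no algorithm that, given two patterns α and β over Σ ∪ ℕ, decides whether L_NE(α) ⊆ L_NE(β). Formally, the predicate 'L_NE(α) ⊆ L_NE(β)' on pairs of patterns (finite words over Σ ∪ ℕ) is not a computable predicate. -/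
/-- The set of variables occurring in a pattern. -/
def varsOf {σ : Type} (p : Pattern σ) : Set ℕ := {x | Sum.inr x ∈ p}

/-- The non-erasing pattern language `L_NE(p)` of a plain pattern. -/
def LangNE {σ : Type} (p : Pattern σ) : Set (List σ) :=
  {w | ∃ s : ℕ → List σ, (∀ x ∈ varsOf p, s x ≠ []) ∧ applySub s p = w}


namespace NEInc

section gadget
variable {σ : Type}

theorem applySub_append (s : ℕ → List σ) (p q : Pattern σ) :
    applySub s (p ++ q) = applySub s p ++ applySub s q := by
  induction p with
  | nil => simp [applySub]
  | cons c p ih => simp [applySub, ih]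

theorem applySub_cons (s : ℕ → List σ) (c : σ ⊕ ℕ) (q : Pattern σ) :
    applySub s (c :: q) = Sum.elim (fun a => [a]) s c ++ applySub s q := rfl

theorem applySub_nil (s : ℕ → List σ) : applySub s ([] : Pattern σ) = [] := rfl

/-- Renaming of variables. -/
def ren (f : ℕ → ℕ) (p : Pattern σ) : Pattern σ := p.map (Sum.map id f)

theorem applySub_ren (s : ℕ → List σ) (f : ℕ → ℕ) (p : Pattern σ) :
    applySub s (ren f p) = applySub (fun n => s (f n)) p := by
  induction p with
  | nil => simp [applySub, ren]
  | cons c p ih =>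
    have : ren f (c :: p) = Sum.map id f c :: ren f p := rfl
    rw [this, applySub_cons, applySub_cons, ih]
    cases c <;> simp

/-- A terminal word as a pattern. -/
def lit (w : List σ) : Pattern σ := w.map Sum.inl

theorem applySub_lit (s : ℕ → List σ) (w : List σ) : applySub s (lit w) = w := by
  induction w with
  | nil => rfl
  | cons c p ih =>
    have : lit (c :: p) = Sum.inl c :: lit p := rfl
    rw [this, applySub_cons, ih]; simp

theorem applySub_congr (s t : ℕ → List σ) (p : Pattern σ) (h : ∀ x ∈ varsOf p, s x = t x) :
    applySub s p = applySub t p := by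
  induction p with
  | nil => rfl
  | cons c p ih =>
    rw [applySub_cons, applySub_cons, ih (fun x hx => h x (List.mem_cons_of_mem _ hx))]
    cases c with
    | inl c => rfl
    | inr x => simp [h x (by simp [varsOf])]

theorem mem_LangNE_iff (a : σ) (p : Pattern σ) (w : List σ) :
    w ∈ LangNE p ↔ ∃ s : ℕ → List σ, (∀ x, s x ≠ []) ∧ applySub s p = w := by
  classical
  constructor
  · rintro ⟨s, hs, rfl⟩
    refine ⟨fun x => if s x = [] then [a] else s x, fun x => ?_, ?_⟩
    · by_cases h : s x = [] <;> simp [h]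
    · apply applySub_congr
      intro x hx
      simp [hs x hx]
  · rintro ⟨s, hs, rfl⟩
    exact ⟨s, fun x _ => hs x, rfl⟩

/-- A component word: absorber, three markers, two slots. -/
def compW (b : σ) (z m G D : List σ) : List σ :=
  z ++ b :: (m ++ b :: (G ++ b :: (m ++ b :: (D ++ b :: (m ++ [b])))))

/-- A component pattern. -/
def comp (b : σ) (e : Pattern σ × Pattern σ) : Pattern σ :=
  [Sum.inr 1, Sum.inl b, Sum.inr 0, Sum.inl b] ++ (ren (fun n => n + 2) e.1 ++
    ([Sum.inl b, Sum.inr 0, Sum.inl b] ++ (ren (fun n => n + 2) e.2 ++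
      [Sum.inl b, Sum.inr 0, Sum.inl b])))

theorem applySub_comp (s : ℕ → List σ) (b : σ) (e : Pattern σ × Pattern σ) :
    applySub s (comp b e) = compW b (s 1) (s 0) (applySub (fun n => s (n + 2)) e.1)
      (applySub (fun n => s (n + 2)) e.2) := by
  simp [comp, compW, applySub_append, applySub_cons, applySub_nil, applySub_ren]

/-- Four copies of the letter. -/
def quad (a : σ) : List σ := [a, a, a, a]

/-- The dummy word of a component. -/
def dummy (a b : σ) (e : Pattern σ × Pattern σ) : List σ :=
  compW b (quad a) [a] (applySub (fun _ => quad a) e.1) (applySub (fun _ => quad a) e.2)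

/-- All dummies. -/
def dums (a b : σ) : List (Pattern σ × Pattern σ) → List σ
  | [] => []
  | e :: es => dummy a b e ++ dums a b es

theorem dums_append (a b : σ) (l l' : List (Pattern σ × Pattern σ)) :
    dums a b (l ++ l') = dums a b l ++ dums a b l' := by
  induction l with
  | nil => rfl
  | cons e l ih => simp [dums, ih]

/-- All component patterns, with disjoint variables. -/
def comps (b : σ) : ℕ → List (Pattern σ × Pattern σ) → Pattern σ
  | i, [] => [Sum.inr (Nat.pair i 1)]
  | i, e :: es => ren (Nat.pair i) (comp b e) ++ comps b (i + 1) es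

/-- The selector. -/
def sel : ℕ → List (Pattern σ × Pattern σ) → Pattern σ
  | _, [] => []
  | i, _ :: es => Sum.inr (Nat.pair i 0) :: sel (i + 1) es

/-- The right pattern. -/
def beta (a b : σ) (errs : List (Pattern σ × Pattern σ)) : Pattern σ :=
  sel 0 errs ++ (lit [b, a, a, a, b] ++ comps b 0 errs)

/-- Words of the left language. -/
def wd (a b : σ) (errs : List (Pattern σ × Pattern σ)) (H Y : List σ) : List σ :=
  List.replicate (errs.length + 1) a ++ b :: ([a, a, a] ++ b :: (dums a b errs ++
    compW b (quad a) [a, a] H Y ++ (dums a b errs ++ quad a)))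

/-- default local substitution -/
def dsub (a : σ) (v : ℕ) : List σ := if v = 0 then [a] else quad a

theorem comps_dummy (a b : σ) (s : ℕ → List σ) (l : List (Pattern σ × Pattern σ)) (k : ℕ)
    (h : ∀ j v, k ≤ j → s (Nat.pair j v) = dsub a v) :
    applySub s (comps b k l) = dums a b l ++ quad a := by
  induction l generalizing k with
  | nil => simp [comps, applySub_cons, applySub_nil, dums, h, dsub]
  | cons e l ih =>
    rw [comps, applySub_append, applySub_ren, applySub_comp, ih (k + 1) (fun j v hj => h j v (by omega))]
    simp [dums, dummy, h, dsub]

theorem comps_pre (a b : σ) (s : ℕ → List σ) (pre l : List (Pattern σ × Pattern σ)) (k : ℕ)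
    (h : ∀ j v, k ≤ j → j < k + pre.length → s (Nat.pair j v) = dsub a v) :
    applySub s (comps b k (pre ++ l)) =
      dums a b pre ++ applySub s (comps b (k + pre.length) l) := by
  induction pre generalizing k with
  | nil => simp [dums]
  | cons e pre ih =>
    have h0 : ∀ v, s (Nat.pair k v) = dsub a v := fun v => h k v le_rfl (by simp)
    rw [List.cons_append, comps, applySub_append, applySub_ren, applySub_comp,
      ih (k + 1) (fun j v hj hj' => h j v (by omega) (by simp; omega))]
    simp [dums, dummy, h0, dsub, Nat.add_assoc, Nat.add_comm 1]

theorem comps_post (a b : σ) (s : ℕ → List σ) (l : List (Pattern σ × Pattern σ)) (k : ℕ)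
    (X : List σ) (h0 : s (Nat.pair k 1) = X ++ quad a)
    (h : ∀ j v, k ≤ j → (j ≠ k ∨ v ≠ 1) → s (Nat.pair j v) = dsub a v) :
    applySub s (comps b k l) = X ++ (dums a b l ++ quad a) := by
  cases l with
  | nil => simp [comps, applySub_cons, applySub_nil, dums, h0]
  | cons e l =>
    rw [comps, applySub_append, applySub_ren, applySub_comp,
      comps_dummy a b s l (k + 1) (fun j v hj => h j v (by omega) (by omega))]
    have h1 : ∀ v, s (Nat.pair k (v + 2)) = dsub a (v + 2) := fun v => h _ _ le_rfl (by omega)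
    simp [dums, dummy, h0, h k 0 le_rfl, h1, dsub, compW]

theorem sel_append (pre l : List (Pattern σ × Pattern σ)) (k : ℕ) :
    sel k (pre ++ l) = sel k pre ++ sel (k + pre.length) l := by
  induction pre generalizing k with
  | nil => simp [sel]
  | cons e pre ih => simp [sel, ih, Nat.add_assoc, Nat.add_comm 1]

theorem sel_dummy (a : σ) (s : ℕ → List σ) (l : List (Pattern σ × Pattern σ)) (k : ℕ)
    (h : ∀ j, k ≤ j → j < k + l.length → s (Nat.pair j 0) = [a]) :
    applySub s (sel k l) = List.replicate l.length a := by
  induction l generalizing k with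
  | nil => simp [sel, applySub_nil]
  | cons e l ih =>
    rw [sel, applySub_cons, ih (k + 1) (fun j hj hj' => h j (by omega) (by simp; omega))]
    simp [h k le_rfl, List.replicate_succ]

theorem wd_mem (a b : σ) (pre post : List (Pattern σ × Pattern σ)) (e : Pattern σ × Pattern σ)
    (t : ℕ → List σ) (ht : ∀ x, t x ≠ []) :
    wd a b (pre ++ e :: post) (applySub t e.1) (applySub t e.2) ∈
      LangNE (beta a b (pre ++ e :: post)) := by
  rw [mem_LangNE_iff a]
  set i := pre.length with hi
  let S : ℕ → ℕ → List σ := fun j v =>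
    if j = i then (if v = 0 then [a, a] else if v = 1 then dums a b (e :: post) ++ quad a
      else t (v - 2))
    else if j = i + 1 ∧ v = 1 then dums a b (pre ++ [e]) ++ quad a else dsub a v
  let s : ℕ → List σ := fun n => S (Nat.unpair n).1 (Nat.unpair n).2
  have hs : ∀ j v, s (Nat.pair j v) = S j v := by intro j v; simp [s]
  refine ⟨s, ?_, ?_⟩
  · intro x
    simp only [s, S]
    split_ifs <;> simp [quad, ht, dsub]
    split_ifs <;> simp
  · rw [beta, applySub_append, applySub_append, applySub_lit, sel_append, applySub_append,
      sel_dummy a, comps_pre a, sel, comps, applySub_cons, sel_dummy a, applySub_append,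
      comps_post a b s post (0 + pre.length + 1) (dums a b (pre ++ [e])), applySub_ren, applySub_comp]
    · have e1 : ∀ v, s (Nat.pair pre.length (v + 2)) = t v := by
        intro v; rw [hs]; simp [S, hi]
      have e2 : s (Nat.pair pre.length 0) = [a, a] := by rw [hs]; simp [S, hi]
      have e3 : s (Nat.pair pre.length 1) = dums a b (e :: post) ++ quad a := by
        rw [hs]; simp [S, hi]
      simp only [Nat.zero_add, e1, e2, e3, wd]
      have e4 : List.replicate ((pre ++ e :: post).length + 1) a =
          List.replicate pre.length a ++ ([a, a] ++ List.replicate post.length a) := by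
        have : [a, a] = List.replicate 2 a := rfl
        rw [this, List.replicate_append_replicate, List.replicate_append_replicate]
        congr 1; simp; omega
      rw [e4]
      simp [compW, dums_append, dums, e2]
    · rw [hs]; simp [S, hi]
    · intro j v hj hjv
      rw [hs]; simp only [S]
      rw [if_neg (by omega), if_neg (by omega)]
    · intro j hj hj'
      rw [hs]; simp only [S]
      rw [if_neg (by omega), if_neg (by omega)]; simp [dsub]
    · intro j v hj hj'
      rw [hs]; simp only [S]
      rw [if_neg (by omega), if_neg (by omega)]
    · intro j hj hj'
      rw [hs]; simp only [S]
      rw [if_neg (by omega), if_neg (by omega)]; simp [dsub]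

/-! Converse direction. -/

theorem sel_length (s : ℕ → List σ) (hs : ∀ x, s x ≠ []) (l : List (Pattern σ × Pattern σ))
    (k : ℕ) : l.length ≤ (applySub s (sel k l)).length := by
  induction l generalizing k with
  | nil => simp
  | cons e l ih =>
    have h1 := ih (k + 1)
    have h2 := List.length_pos_of_ne_nil (hs (Nat.pair k 0))
    simp [sel, applySub_cons]; omega

theorem sel_exists (a : σ) (s : ℕ → List σ) (hs : ∀ x, s x ≠ [])
    (l : List (Pattern σ × Pattern σ)) (k : ℕ)
    (h : applySub s (sel k l) = List.replicate (l.length + 1) a) :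
    ∃ pre e post, l = pre ++ e :: post ∧ s (Nat.pair (k + pre.length) 0) = [a, a] := by
  induction l generalizing k with
  | nil => simp [sel, applySub_nil] at h
  | cons e l ih =>
    have h1 := sel_length s hs l (k + 1)
    have h2 := List.length_pos_of_ne_nil (hs (Nat.pair k 0))
    rw [sel, applySub_cons] at h
    simp only [Sum.elim_inr] at h
    rw [List.append_eq_replicate_iff] at h
    obtain ⟨h3, h4, h5⟩ := h
    simp only [List.length_cons] at h3
    by_cases h6 : (s (Nat.pair k 0)).length = 1
    · rw [show (applySub s (sel (k + 1) l)).length = l.length + 1 by omega] at h5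
      obtain ⟨pre, e', post, rfl, h⟩ := ih (k + 1) h5
      exact ⟨e :: pre, e', post, rfl, by rw [← h]; congr 2; simp; omega⟩
    · rw [show (s (Nat.pair k 0)).length = 2 by omega] at h4
      exact ⟨[], e, l, rfl, by simpa using h4⟩

theorem comps_decomp (b : σ) (s : ℕ → List σ) (pre post : List (Pattern σ × Pattern σ))
    (e : Pattern σ × Pattern σ) (k : ℕ) :
    ∃ p q, applySub s (comps b k (pre ++ e :: post)) =
      p ++ (applySub (fun v => s (Nat.pair (k + pre.length) v)) (comp b e) ++ q) := by
  induction pre generalizing k with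
  | nil => exact ⟨[], _, by rw [List.nil_append, comps, applySub_append, applySub_ren]; rfl⟩
  | cons e' pre ih =>
    obtain ⟨p, q, h⟩ := ih (k + 1)
    refine ⟨applySub s (ren (Nat.pair k) (comp b e')) ++ p, q, ?_⟩
    rw [List.cons_append, comps, applySub_append, h]
    simp [Nat.add_assoc, Nat.add_comm 1]

theorem app_cons_inj {α : Type} {x : α} {p q p' q' : List α}
    (h : p ++ x :: q = p' ++ x :: q') (h1 : x ∉ p') (h2 : x ∉ q') : p = p' ∧ q = q' := by
  induction p generalizing p' with
  | nil =>
    cases p' with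
    | nil => simpa using h
    | cons y p' => simp at h; simp [h.1] at h1
  | cons z p ih =>
    cases p' with
    | nil =>
      simp at h
      exact absurd (h.2 ▸ (by simp)) h2
    | cons y p' =>
      simp only [List.cons_append, List.cons.injEq] at h
      have := ih h.2 (fun hh => h1 (List.mem_cons_of_mem _ hh))
      exact ⟨by rw [h.1, this.1], this.2⟩

theorem app_cons_inj3 {α : Type} {x : α} {p q r t p' q' r' t' : List α}
    (h : p ++ x :: (q ++ x :: (r ++ x :: t)) = p' ++ x :: (q' ++ x :: (r' ++ x :: t')))
    (h1 : x ∉ p') (h2 : x ∉ q') (h3 : x ∉ r') (h4 : x ∉ t') : q = q' ∧ r = r' := by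
  classical
  induction p generalizing p' with
  | nil =>
    cases p' with
    | nil =>
      simp only [List.nil_append, List.cons.injEq, true_and] at h
      have hc := congrArg (List.count x) h
      simp only [List.count_append, List.count_cons_self, List.count_eq_zero_of_not_mem h2,
        List.count_eq_zero_of_not_mem h3, List.count_eq_zero_of_not_mem h4] at hc
      have c1 : x ∉ q := by rw [← List.count_eq_zero]; omega
      have c2 : x ∉ r := by rw [← List.count_eq_zero]; omega
      have c3 : x ∉ t := by rw [← List.count_eq_zero]; omega
      have key : ∀ {q q' u u' : List α}, x ∉ q → x ∉ q' → q ++ x :: u = q' ++ x :: u' →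
          q = q' ∧ u = u' := by
        intro q
        induction q with
        | nil =>
          intro q' u u' _ hq' hh
          cases q' with
          | nil => simpa using hh
          | cons y q' => simp at hh; simp [hh.1] at hq'
        | cons z q ih =>
          intro q' u u' hq hq' hh
          cases q' with
          | nil => simp at hh; simp [hh.1] at hq
          | cons y q' =>
            simp only [List.cons_append, List.cons.injEq] at hh
            have := ih (fun hm => hq (List.mem_cons_of_mem _ hm))
              (fun hm => hq' (List.mem_cons_of_mem _ hm)) hh.2
            exact ⟨by rw [hh.1, this.1], this.2⟩
      obtain ⟨k1, k2⟩ := key c1 h2 h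
      exact ⟨k1, (key c2 h3 k2).1⟩
    | cons y p' => simp at h; simp [h.1] at h1
  | cons z p ih =>
    cases p' with
    | nil =>
      exfalso
      have hc := congrArg (List.count x) h
      simp only [List.nil_append, List.cons_append, List.cons.injEq] at h
      rw [h.1] at hc
      simp only [List.cons_append, List.nil_append, List.count_append, List.count_cons_self,
        List.count_eq_zero_of_not_mem h2, List.count_eq_zero_of_not_mem h3,
        List.count_eq_zero_of_not_mem h4] at hc
      omega
    | cons y p' =>
      simp only [List.cons_append, List.cons.injEq] at h
      exact ih h.2 (fun hh => h1 (List.mem_cons_of_mem _ hh))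

variable [DecidableEq σ]

theorem split_inj (b : σ) {p q : List σ} (h : p.splitOn b = q.splitOn b) : p = q := by
  rw [← List.intercalate_splitOn b (xs := p), h, List.intercalate_splitOn]

/-- no block equal to `aa` or `aaa` -/
def Clean (a b : σ) (w : List σ) : Prop :=
  [a, a] ∉ w.splitOn b ∧ [a, a, a] ∉ w.splitOn b

theorem clean_app (a b : σ) (p q : List σ) (hp : Clean a b p) (hq : Clean a b q) :
    Clean a b (p ++ b :: q) := by
  simp only [Clean, List.splitOn_append_cons_self, List.mem_append, not_or] at *
  tauto

theorem clean_rep (a b : σ) (hab : a ≠ b) (n : ℕ) (h2 : n ≠ 2) (h3 : n ≠ 3) :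
    Clean a b (List.replicate n a) := by
  have : (List.replicate n a).splitOn b = [List.replicate n a] := by
    apply List.splitOn_eq_singleton
    intro h; exact hab (List.eq_of_mem_replicate h).symm
  constructor <;> rw [this] <;> simp only [List.mem_singleton] <;> intro h <;>
    have := congrArg List.length h <;> simp at this <;> omega

theorem clean_quad (a b : σ) (hab : a ≠ b) : Clean a b (quad a) :=
  clean_rep a b hab 4 (by omega) (by omega)

theorem clean_dums (a b : σ) (hab : a ≠ b) (l : List (Pattern σ × Pattern σ)) (w : List σ)
    (hw : Clean a b w)
    (hl : ∀ e ∈ l, Clean a b (applySub (fun _ => quad a) e.1) ∧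
      Clean a b (applySub (fun _ => quad a) e.2)) : Clean a b (dums a b l ++ w) := by
  have c1 : Clean a b [a] := clean_rep a b hab 1 (by omega) (by omega)
  induction l with
  | nil => simpa [dums] using hw
  | cons e l ih =>
    have h1 := ih (fun e he => hl e (List.mem_cons_of_mem _ he))
    have h2 := hl e (by simp)
    simp only [dums, dummy, compW, List.append_assoc, List.cons_append, List.nil_append]
    refine clean_app _ _ _ _ (clean_quad a b hab) ?_
    refine clean_app a b [a] _ c1 ?_
    refine clean_app a b _ _ h2.1 ?_
    refine clean_app a b [a] _ c1 ?_
    refine clean_app a b _ _ h2.2 ?_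
    exact clean_app a b [a] _ c1 h1

theorem wd_mem_conv (a b : σ) (hab : a ≠ b) (l : List (Pattern σ × Pattern σ)) (hlen : 3 ≤ l.length)
    (hl : ∀ e ∈ l, Clean a b (applySub (fun _ => quad a) e.1) ∧
      Clean a b (applySub (fun _ => quad a) e.2))
    (H Y : List σ) (hH : Clean a b H) (hY : Clean a b Y) (h : wd a b l H Y ∈ LangNE (beta a b l)) :
    ∃ e ∈ l, ∃ t : ℕ → List σ, (∀ x, t x ≠ []) ∧ applySub t e.1 = H ∧ applySub t e.2 = Y := by
  rw [mem_LangNE_iff a] at h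
  obtain ⟨s, hs, h⟩ := h
  rw [beta, applySub_append, applySub_append, applySub_lit, wd] at h
  have s3 : ([a, a, a] : List σ).splitOn b = [[a, a, a]] := by
    apply List.splitOn_eq_singleton; simp [hab.symm]
  have s2 : ([a, a] : List σ).splitOn b = [[a, a]] := by
    apply List.splitOn_eq_singleton; simp [hab.symm]
  have srep : (List.replicate (l.length + 1) a).splitOn b = [List.replicate (l.length + 1) a] := by
    apply List.splitOn_eq_singleton
    intro h; exact hab (List.eq_of_mem_replicate h).symm
  have cq := clean_quad a b hab
  have cR := clean_dums a b hab l _ cq hl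
  have h' : applySub s (sel 0 l) ++ b :: ([a, a, a] ++ b :: applySub s (comps b 0 l)) =
      List.replicate (l.length + 1) a ++ b :: ([a, a, a] ++ b :: (dums a b l ++
        (compW b (quad a) [a, a] H Y ++ (dums a b l ++ quad a)))) := by
    simpa using h
  have hS := congrArg (List.splitOn b) h'
  simp only [List.splitOn_append_cons_self, s3] at hS
  simp only [List.cons_append, List.nil_append] at hS
  have key := app_cons_inj hS ?_ ?_
  · obtain ⟨k1, k2⟩ := key
    have k1' := split_inj b k1
    obtain ⟨pre, e, post, rfl, he⟩ := sel_exists a s hs l 0 k1'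
    obtain ⟨p, q, hpq⟩ := comps_decomp b s pre post e 0
    have k2' := split_inj b k2
    rw [hpq, applySub_comp] at k2'
    simp only [he, compW] at k2'
    have hS2 := congrArg (List.splitOn b) k2'
    simp only [List.cons_append, List.append_assoc, List.nil_append] at hS2
    have r2 : ∀ r : List σ, a :: a :: b :: r = [a, a] ++ b :: r := fun r => rfl
    simp only [r2] at hS2
    rw [← List.append_assoc, ← List.append_assoc (dums a b _) (quad a)] at hS2
    simp only [List.splitOn_append_cons_self, s2] at hS2
    obtain ⟨k3, k4⟩ := app_cons_inj3 hS2 cR.1 hH.1 hY.1 cR.1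
    exact ⟨e, by simp, _, fun x => hs _, split_inj b k3, split_inj b k4⟩
  · rw [srep]
    simp only [List.mem_singleton]; intro hh
    have := congrArg List.length hh
    simp at this; omega
  · simp only [compW, List.append_assoc, List.cons_append, List.nil_append]
    have r2 : ∀ r : List σ, a :: a :: b :: r = [a, a] ++ b :: r := fun r => rfl
    simp only [r2]
    rw [← List.append_assoc]
    simp only [List.splitOn_append_cons_self, s2, List.mem_append, not_or]
    exact ⟨cR.2, by simp, hH.2, by simp, hY.2, by simp, cR.2⟩

end gadget
end NEInc

namespace NEInc

section errors
set_option linter.unusedSectionVars false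
variable {σ : Type}

/-- `b a^{n₁} b a^{n₂} ...` -/
def blk (a b : σ) : List ℕ → List σ
  | [] => []
  | n :: ns => b :: (List.replicate n a ++ blk a b ns)

theorem blk_append (a b : σ) (l l' : List ℕ) : blk a b (l ++ l') = blk a b l ++ blk a b l' := by
  induction l with
  | nil => rfl
  | cons n l ih => simp [blk, ih]

theorem mem_blk (a b : σ) (l : List ℕ) (c : σ) (h : c ∈ blk a b l) : c = a ∨ c = b := by
  induction l with
  | nil => simp [blk] at h
  | cons n l ih =>
    simp only [blk, List.mem_cons, List.mem_append, List.mem_replicate] at h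
    tauto

theorem word_blk (a b : σ) (x : List σ) (h : ∀ c ∈ x, c = a ∨ c = b) :
    ∃ n ns, x = List.replicate n a ++ blk a b ns := by
  induction x with
  | nil => exact ⟨0, [], rfl⟩
  | cons c x ih =>
    obtain ⟨n, ns, rfl⟩ := ih (fun c hc => h c (List.mem_cons_of_mem _ hc))
    rcases h c (by simp) with rfl | rfl
    · exact ⟨n + 1, ns, rfl⟩
    · exact ⟨0, n :: ns, by simp [blk]⟩

theorem blk_tail (a b : σ) (l : List ℕ) : ∃ t, t ≠ [] ∧ blk a b (l ++ [4]) = b :: t := by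
  cases l with
  | nil => exact ⟨List.replicate 4 a, by simp, by simp [blk]⟩
  | cons k l =>
    refine ⟨List.replicate k a ++ blk a b (l ++ [4]), ?_, rfl⟩
    simp [blk_append, blk]

theorem split_blk [DecidableEq σ] (a b : σ) (hab : a ≠ b) (n : ℕ) (l : List ℕ) :
    ((List.replicate n a ++ blk a b l).splitOn b).map List.length = n :: l := by
  have hs : ∀ n, (List.replicate n a).splitOn b = [List.replicate n a] := by
    intro n
    apply List.splitOn_eq_singleton
    intro h; exact hab (List.eq_of_mem_replicate h).symm
  induction l generalizing n with
  | nil => simp [blk, hs]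
  | cons k l ih =>
    rw [blk, List.splitOn_append_cons_self, List.map_append, ih, hs]
    simp

/-- history word -/
def Hw (a b : σ) (N E : ℕ) (x : List σ) : List σ :=
  quad a ++ b :: (List.replicate N a ++ b :: (x ++ b :: (List.replicate E a ++ b :: quad a)))

theorem Hw_eq (a b : σ) (N E n : ℕ) (ns : List ℕ) :
    Hw a b N E (List.replicate n a ++ blk a b ns) =
      List.replicate 4 a ++ blk a b ((N :: n :: (ns ++ [E])) ++ [4]) := by
  simp [Hw, quad, blk, blk_append, List.replicate_succ]

/-- error: a foreign letter in the history -/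
def errLetter (c : σ) : Pattern σ × Pattern σ :=
  ([Sum.inr 0, Sum.inl c, Sum.inr 1], [Sum.inr 2])
/-- error: a foreign letter in `y` -/
def errY (c : σ) : Pattern σ × Pattern σ :=
  ([Sum.inr 0], [Sum.inr 2, Sum.inl c, Sum.inr 3])
/-- error: `y` is too short -/
def errLong : Pattern σ × Pattern σ :=
  ([Sum.inr 0, Sum.inr 2, Sum.inr 1], [Sum.inr 2])
/-- error: empty block -/
def errEmpty (b : σ) : Pattern σ × Pattern σ :=
  ([Sum.inr 0, Sum.inl b, Sum.inl b, Sum.inr 1], [Sum.inr 2])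
/-- linear block pattern -/
def linBlock (a : σ) (p p' q : ℕ) : Pattern σ :=
  List.replicate p (Sum.inr 2) ++ (List.replicate p' (Sum.inr 3) ++ lit (List.replicate q a))
/-- error: consecutive blocks in a linear relation -/
def errLin (a b : σ) (p p' q c c' d : ℕ) : Pattern σ × Pattern σ :=
  ([Sum.inr 0, Sum.inl b] ++ (linBlock a p p' q ++ ([Sum.inl b] ++ (linBlock a c c' d ++
    [Sum.inl b, Sum.inr 1]))), [Sum.inr 2, Sum.inr 3, Sum.inr 4])

theorem applySub_replicate (a : σ) (s : ℕ → List σ) (j n k : ℕ) (h : s j = List.replicate n a) :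
    applySub s (List.replicate k (Sum.inr j)) = List.replicate (k * n) a := by
  induction k with
  | zero => simp [applySub_nil]
  | succ k ih =>
    rw [List.replicate_succ, applySub_cons, ih, Sum.elim_inr, h, List.replicate_append_replicate]
    congr 1; ring

theorem applySub_linBlock (a : σ) (s : ℕ → List σ) (u v p p' q : ℕ)
    (h : s 2 = List.replicate u a) (h' : s 3 = List.replicate v a) :
    applySub s (linBlock a p p' q) = List.replicate (p * u + p' * v + q) a := by
  rw [linBlock, applySub_append, applySub_append, applySub_lit, applySub_replicate a s 2 u p h,
    applySub_replicate a s 3 v p' h', List.replicate_append_replicate,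
    List.replicate_append_replicate, Nat.add_assoc]

theorem applySub_errLin (a b : σ) (s : ℕ → List σ) (u v p p' q c c' d : ℕ)
    (h : s 2 = List.replicate u a) (h' : s 3 = List.replicate v a) :
    applySub s (errLin a b p p' q c c' d).1 = s 0 ++ b :: (List.replicate (p * u + p' * v + q) a ++
      b :: (List.replicate (c * u + c' * v + d) a ++ b :: s 1)) := by
  simp only [errLin, applySub_append, applySub_linBlock a s u v _ _ _ h h']
  simp [applySub_cons, applySub_nil]

/-- the piecewise affine map -/
def pw (M : ℕ) (A B : ℕ → ℕ) (n : ℕ) : ℕ := A (n % M) * (n / M) + B (n % M)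

variable [DecidableEq σ] [Fintype σ]

/-- The list of all error patterns. -/
noncomputable def errs (a b : σ) (M : ℕ) (A B : ℕ → ℕ) : List (Pattern σ × Pattern σ) :=
  errLong :: errEmpty b :: errLin a b (2 * M) 1 0 1 0 0 ::
    (((Finset.univ.filter (fun c => c ≠ a ∧ c ≠ b)).toList.map errLetter) ++
    (((Finset.univ.filter (fun c => c ≠ a)).toList.map errY) ++
    (((List.range M).map (fun r => errLin a b M 0 r (A r) 1 (B r))) ++
    ((List.range M).flatMap (fun r => (List.range (A r)).map
      (fun j => errLin a b M M r (A r) 0 (B r + j)))))))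

theorem mem_errs (a b : σ) (M : ℕ) (A B : ℕ → ℕ) (e : Pattern σ × Pattern σ) :
    e ∈ errs a b M A B ↔ e = errLong ∨ e = errEmpty b ∨ e = errLin a b (2 * M) 1 0 1 0 0 ∨
      (∃ c, (c ≠ a ∧ c ≠ b) ∧ errLetter c = e) ∨ (∃ c, c ≠ a ∧ errY c = e) ∨
      (∃ r < M, errLin a b M 0 r (A r) 1 (B r) = e) ∨
      (∃ r < M, ∃ j < A r, errLin a b M M r (A r) 0 (B r + j) = e) := by
  simp [errs]

theorem clean_errLin (a b : σ) (hab : a ≠ b) (p p' q c c' d : ℕ) (h : 1 ≤ p + p')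
    (h' : 1 ≤ c + c') :
    Clean a b (applySub (fun _ => quad a) (errLin a b p p' q c c' d).1) ∧
      Clean a b (applySub (fun _ => quad a) (errLin a b p p' q c c' d).2) := by
  constructor
  · rw [applySub_errLin a b _ 4 4 _ _ _ _ _ _ rfl rfl]
    refine clean_app a b _ _ (clean_quad a b hab) ?_
    refine clean_app a b _ _ (clean_rep a b hab _ (by omega) (by omega)) ?_
    exact clean_app a b _ _ (clean_rep a b hab _ (by omega) (by omega)) (clean_quad a b hab)
  · exact clean_rep a b hab 12 (by omega) (by omega)

theorem clean_of_not_mem (a b : σ) (w : List σ) (c : σ) (hb : b ∉ w) (hc : c ∈ w) (hca : c ≠ a) :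
    Clean a b w := by
  constructor <;> rw [List.splitOn_eq_singleton hb] <;> simp only [List.mem_singleton] <;>
    rintro rfl <;> simp at hc <;> exact hca hc

theorem clean_errs (a b : σ) (hab : a ≠ b) (M : ℕ) (hM : 0 < M) (A B : ℕ → ℕ)
    (hA : ∀ r < M, 1 ≤ A r) :
    ∀ e ∈ errs a b M A B, Clean a b (applySub (fun _ => quad a) e.1) ∧
      Clean a b (applySub (fun _ => quad a) e.2) := by
  have cq := clean_quad a b hab
  intro e he
  rw [mem_errs] at he
  rcases he with rfl | rfl | rfl | ⟨c, ⟨hca, hcb⟩, rfl⟩ | ⟨c, hca, rfl⟩ | ⟨r, hr, rfl⟩ |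
    ⟨r, hr, j, hj, rfl⟩
  · exact ⟨clean_rep a b hab 12 (by omega) (by omega), cq⟩
  · refine ⟨?_, cq⟩
    exact clean_app a b (quad a) _ cq (clean_app a b [] _ (clean_rep a b hab 0 (by omega) (by omega)) cq)
  · exact clean_errLin a b hab _ _ _ _ _ _ (by omega) (by omega)
  · refine ⟨clean_of_not_mem a b _ c ?_ ?_ hca, cq⟩
    · simp [errLetter, applySub_cons, applySub_nil, quad, hab.symm, hcb.symm]
    · simp [errLetter, applySub_cons]
  · refine ⟨cq, ?_⟩
    by_cases hcb : c = b
    · subst hcb; exact clean_app a c (quad a) _ cq cq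
    · refine clean_of_not_mem a b _ c ?_ ?_ hca
      · simp [errY, applySub_cons, applySub_nil, quad, hab.symm, Ne.symm hcb]
      · simp [errY, applySub_cons]
  · exact clean_errLin a b hab _ _ _ _ _ _ (by omega) (by omega)
  · exact clean_errLin a b hab _ _ _ _ _ _ (by omega) (by have := hA r hr; omega)

theorem wd_mem_of_mem (a b : σ) (l : List (Pattern σ × Pattern σ)) (e : Pattern σ × Pattern σ)
    (he : e ∈ l) (H Y : List σ) (t : ℕ → List σ) (ht : ∀ x, t x ≠ [])
    (h1 : applySub t e.1 = H) (h2 : applySub t e.2 = Y) : wd a b l H Y ∈ LangNE (beta a b l) := by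
  obtain ⟨pre, post, rfl⟩ := List.append_of_mem he
  subst h1 h2
  exact wd_mem a b pre post e t ht

/-- local substitution from five words -/
def sub5 (x0 x1 x2 x3 x4 : List σ) : ℕ → List σ
  | 0 => x0
  | 1 => x1
  | 2 => x2
  | 3 => x3
  | _ => x4

theorem sub5_ne (x0 x1 x2 x3 x4 : List σ) (h0 : x0 ≠ []) (h1 : x1 ≠ []) (h2 : x2 ≠ [])
    (h3 : x3 ≠ []) (h4 : x4 ≠ []) : ∀ x, sub5 x0 x1 x2 x3 x4 x ≠ [] := by
  intro x
  unfold sub5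
  split <;> assumption

theorem lin_match (a b : σ) (l : List (Pattern σ × Pattern σ)) (p p' q c c' d : ℕ)
    (he : errLin a b p p' q c c' d ∈ l) (X Z : List σ) (hX : X ≠ []) (hZ : Z ≠ []) (n m T u v : ℕ)
    (hn : n = p * u + p' * v + q) (hm : m = c * u + c' * v + d) (hu : 1 ≤ u) (hv : 1 ≤ v)
    (hT : u + v < T) :
    wd a b l (X ++ b :: (List.replicate n a ++ b :: (List.replicate m a ++ b :: Z)))
      (List.replicate T a) ∈ LangNE (beta a b l) := by
  refine wd_mem_of_mem a b l _ he _ _ (sub5 X Z (List.replicate u a) (List.replicate v a)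
    (List.replicate (T - u - v) a)) ?_ ?_ ?_
  · apply sub5_ne _ _ _ _ _ hX hZ <;> simp <;> omega
  · rw [applySub_errLin a b _ u v _ _ _ _ _ _ rfl rfl, hn, hm]; rfl
  · simp [errLin, applySub_cons, applySub_nil, sub5]
    omega

theorem chain_last (f : ℕ → ℕ) (Orb : ℕ → Prop) (hcl : ∀ n, Orb n → Orb (f n)) (l : List ℕ) (N : ℕ)
    (hN : Orb N)
    (h : ∀ l1 n m l2, N :: l = l1 ++ n :: m :: l2 → Orb n → m = f n) (l' : List ℕ) (E : ℕ)
    (hl : l = l' ++ [E]) : E = f^[l.length] N := by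
  induction l generalizing N l' with
  | nil => simp at hl
  | cons m l ih =>
    have hm : m = f N := h [] N m l rfl hN
    cases l' with
    | nil => simp at hl; simp [hl.2, ← hl.1, hm]
    | cons k l' =>
      simp only [List.cons_append, List.cons.injEq] at hl
      have := ih m (hm ▸ hcl _ hN) (fun l1 n m' l2 hh ho => h (N :: l1) n m' l2 (by rw [hh]; rfl) ho)
        l' hl.2
      rw [this, hm, List.length_cons, Function.iterate_succ_apply]

theorem step_bad (a b : σ) (M : ℕ) (hM : 0 < M) (A B : ℕ → ℕ)
    (hA : ∀ r < M, 1 ≤ A r) (K : ℕ) (hK : ∀ r < M, 2 * M * (A r + B r) ≤ K) (hKM : M ≤ K)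
    (n m T : ℕ) (hn : K ≤ n) (hnT : n < T) (hmT : m < T) (hbad : m ≠ pw M A B n)
    (X Z : List σ) (hX : X ≠ []) (hZ : Z ≠ []) :
    wd a b (errs a b M A B) (X ++ b :: (List.replicate n a ++ b :: (List.replicate m a ++ b :: Z)))
      (List.replicate T a) ∈ LangNE (beta a b (errs a b M A B)) := by
  have hdm := Nat.div_add_mod n M
  have hr := Nat.mod_lt n hM
  have hq : 1 ≤ n / M := Nat.div_pos (by omega) hM
  unfold pw at hbad
  have hA' := hA _ hr
  have hK' := hK _ hr
  generalize hrd : n % M = r at *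
  generalize n / M = q at *
  rcases Nat.eq_zero_or_pos m with rfl | hm0
  · refine wd_mem_of_mem a b _ (errEmpty b) ?_ _ _ (sub5 (X ++ b :: List.replicate n a) Z
      (List.replicate T a) [a] [a]) ?_ ?_ ?_
    · rw [mem_errs]; tauto
    · apply sub5_ne <;> simp [hZ]; omega
    · simp [errEmpty, applySub_cons, applySub_nil, sub5]
    · simp [errEmpty, applySub_cons, applySub_nil, sub5]
  by_cases h1 : 2 * M * m < n
  · refine lin_match a b _ (2 * M) 1 0 1 0 0 ?_ X Z hX hZ n m T m (n - 2 * M * m) ?_ ?_ hm0 ?_ ?_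
    · rw [mem_errs]; tauto
    · omega
    · omega
    · omega
    · have : 1 * m ≤ 2 * M * m := Nat.mul_le_mul_right _ (by omega)
      omega
  push Not at h1
  rcases Nat.lt_or_gt_of_ne hbad with h2 | h2
  · -- too short
    have h3 : A r + B r ≤ m := by
      have : 2 * M * (A r + B r) ≤ 2 * M * m := by omega
      exact Nat.le_of_mul_le_mul_left this (by omega)
    have hd := Nat.div_add_mod (m - B r) (A r)
    have hj := Nat.mod_lt (m - B r) (show 0 < A r by omega)
    have hu : 1 ≤ (m - B r) / A r := Nat.div_pos (by omega) (by omega)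
    generalize (m - B r) % A r = j at *
    generalize (m - B r) / A r = u at *
    have huq : u < q := by
      have : A r * u < A r * q := by omega
      exact Nat.lt_of_mul_lt_mul_left this
    refine lin_match a b _ M M r (A r) 0 (B r + j) ?_ X Z hX hZ n m T u (q - u) ?_ ?_ hu ?_ ?_
    · rw [mem_errs]
      exact Or.inr (Or.inr (Or.inr (Or.inr (Or.inr (Or.inr ⟨r, hr, j, hj, rfl⟩)))))
    · rw [← Nat.mul_add, show u + (q - u) = q by omega]; exact hdm.symm
    · omega
    · omega
    · have : 1 * q ≤ M * q := Nat.mul_le_mul_right _ hM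
      omega
  · refine lin_match a b _ M 0 r (A r) 1 (B r) ?_ X Z hX hZ n m T q (m - (A r * q + B r)) ?_ ?_ hq ?_ ?_
    · rw [mem_errs]
      exact Or.inr (Or.inr (Or.inr (Or.inr (Or.inr (Or.inl ⟨r, hr, rfl⟩)))))
    · omega
    · omega
    · omega
    · have : 1 * q ≤ A r * q := Nat.mul_le_mul_right _ hA'
      omega

theorem all_mem (a b : σ) (M : ℕ) (hM : 0 < M) (A B : ℕ → ℕ)
    (hA : ∀ r < M, 1 ≤ A r) (K : ℕ) (hK : ∀ r < M, 2 * M * (A r + B r) ≤ K) (hKM : M ≤ K)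
    (N E : ℕ) (horb : ∀ t, K ≤ (pw M A B)^[t] N) (hno : ¬ ∃ t, (pw M A B)^[t + 2] N = E)
    (x y : List σ) :
    wd a b (errs a b M A B) (Hw a b N E x) (a :: (y ++ [a])) ∈
      LangNE (beta a b (errs a b M A B)) := by
  by_cases hy : ∃ c ∈ y, c ≠ a
  · obtain ⟨c, hc, hca⟩ := hy
    obtain ⟨y1, y2, rfl⟩ := List.append_of_mem hc
    refine wd_mem_of_mem a b _ (errY c) ?_ _ _
      (sub5 (Hw a b N E x) [a] (a :: y1) (y2 ++ [a]) [a]) ?_ ?_ ?_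
    · rw [mem_errs]
      exact Or.inr (Or.inr (Or.inr (Or.inr (Or.inl ⟨c, hca, rfl⟩))))
    · apply sub5_ne <;> simp [Hw]
    · simp [errY, applySub_cons, applySub_nil, sub5]
    · simp [errY, applySub_cons, applySub_nil, sub5]
  push Not at hy
  have hY : a :: (y ++ [a]) = List.replicate (y.length + 2) a := by
    rw [List.eq_replicate_iff]
    simp
    rintro c (h | h)
    · exact hy c h
    · exact h
  rw [hY]
  generalize hT : y.length + 2 = T
  by_cases hx : ∃ c ∈ x, c ≠ a ∧ c ≠ b
  · obtain ⟨c, hc, hca⟩ := hx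
    obtain ⟨x1, x2, rfl⟩ := List.append_of_mem hc
    refine wd_mem_of_mem a b _ (errLetter c) ?_ _ _
      (sub5 (quad a ++ b :: (List.replicate N a ++ b :: x1))
        (x2 ++ b :: (List.replicate E a ++ b :: quad a)) (List.replicate T a) [a] [a]) ?_ ?_ ?_
    · rw [mem_errs]
      exact Or.inr (Or.inr (Or.inr (Or.inl ⟨c, hca, rfl⟩)))
    · apply sub5_ne <;> simp; omega
    · simp [errLetter, applySub_cons, applySub_nil, sub5, Hw]
    · simp [errLetter, applySub_cons, applySub_nil, sub5]
  have hx' : ∀ c ∈ x, c = a ∨ c = b := by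
    intro c hc; by_contra h; push Not at h; exact hx ⟨c, hc, h⟩
  obtain ⟨n1, ns, rfl⟩ := word_blk a b x hx'
  rw [Hw_eq]
  generalize hfull : N :: n1 :: (ns ++ [E]) = full
  -- too long
  by_cases hlong : ∃ n ∈ full, T ≤ n
  · obtain ⟨n, hn, hTn⟩ := hlong
    obtain ⟨l1, l2, rfl⟩ := List.append_of_mem hn
    obtain ⟨t, ht, hbt⟩ := blk_tail a b l2
    refine wd_mem_of_mem a b _ errLong ?_ _ _
      (sub5 (List.replicate 4 a ++ blk a b l1 ++ [b])
        (List.replicate (n - T) a ++ b :: t) (List.replicate T a) [a] [a]) ?_ ?_ ?_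
    · rw [mem_errs]; tauto
    · apply sub5_ne <;> simp; omega
    · have : List.replicate n a = List.replicate T a ++ List.replicate (n - T) a := by
        rw [List.replicate_append_replicate]; congr 1; omega
      have e1 : blk a b (l1 ++ n :: l2 ++ [4]) =
          blk a b l1 ++ b :: (List.replicate n a ++ b :: t) := by
        rw [List.append_assoc, blk_append, List.cons_append, blk, hbt]
      rw [e1, this]
      simp [errLong, applySub_cons, applySub_nil, sub5, -List.replicate_append_replicate]
    · simp [errLong, applySub_cons, applySub_nil, sub5]
  push Not at hlong
  by_contra hcon
  apply hno
  refine ⟨ns.length, ?_⟩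
  have := chain_last (pw M A B) (fun n => ∃ t, n = (pw M A B)^[t] N)
    (fun n ⟨t, ht⟩ => ⟨t + 1, by rw [ht, Function.iterate_succ_apply']⟩) (n1 :: (ns ++ [E])) N
    ⟨0, rfl⟩ ?_ (n1 :: ns) E rfl
  · rw [this]; simp
  · intro l1 n m l2 hh ⟨t, ht⟩
    by_contra hbad
    apply hcon
    rw [hfull] at hh
    subst hh
    obtain ⟨Z, hZ, hbZ⟩ := blk_tail a b l2
    have e1 : List.replicate 4 a ++ blk a b (l1 ++ n :: m :: l2 ++ [4]) =
        (List.replicate 4 a ++ blk a b l1) ++ b :: (List.replicate n a ++ b ::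
          (List.replicate m a ++ b :: Z)) := by
      rw [List.append_assoc, blk_append, List.cons_append, List.cons_append, blk, blk, hbZ]
      simp
    rw [e1]
    exact step_bad a b M hM A B hA K hK hKM n m T (ht ▸ horb t) (hlong n (by simp))
      (hlong m (by simp)) hbad _ _ (by simp) hZ

theorem consec (g : ℕ → ℕ) (k n m : ℕ) (l1 l2 : List ℕ)
    (h : (List.range k).map g = l1 ++ n :: m :: l2) : ∃ i, n = g i ∧ m = g (i + 1) := by
  refine ⟨l1.length, ?_, ?_⟩
  · have h1 := congrArg (fun l : List ℕ => l[l1.length]?) h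
    simp only [List.getElem?_map, List.getElem?_append_right le_rfl] at h1
    rw [Option.map_eq_some_iff.2 ⟨l1.length, ?_, rfl⟩] at h1
    · simpa using h1.symm
    · have := congrArg List.length h
      simp at this
      simp [this]
  · have h1 := congrArg (fun l : List ℕ => l[l1.length + 1]?) h
    simp only [List.getElem?_map, List.getElem?_append_right (Nat.le_add_right _ _)] at h1
    rw [Option.map_eq_some_iff.2 ⟨l1.length + 1, ?_, rfl⟩] at h1
    · simpa using h1.symm
    · have := congrArg List.length h
      simp at this
      simp [this]

theorem cancel_ends {α : Type} (x y : α) (l p q r : List α) (hp : p ≠ []) (hr : r ≠ [])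
    (h : x :: (l ++ [y]) = p ++ (q ++ r)) : ∃ p' r', l = p' ++ (q ++ r') := by
  cases p with
  | nil => exact absurd rfl hp
  | cons z p =>
    obtain ⟨r', w, rfl⟩ := List.eq_nil_or_concat r |>.resolve_left hr
    simp only [List.cons_append, List.cons.injEq, List.concat_eq_append] at h
    refine ⟨p, r', ?_⟩
    have h2 := h.2
    rw [← List.append_assoc, ← List.append_assoc] at h2
    have := List.append_inj_left' h2 rfl
    rw [this, List.append_assoc]

theorem not_all_mem (a b : σ) (hab : a ≠ b) (M : ℕ) (hM : 0 < M) (A B : ℕ → ℕ)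
    (hA : ∀ r < M, 1 ≤ A r) (K : ℕ) (hKM : M ≤ K) (hK4 : 4 ≤ K)
    (N E : ℕ) (horb : ∀ t, K ≤ (pw M A B)^[t] N) (t : ℕ) (hE : (pw M A B)^[t + 2] N = E) :
    ∃ x y : List σ, x ≠ [] ∧ y ≠ [] ∧
    wd a b (errs a b M A B) (Hw a b N E x) (a :: (y ++ [a])) ∉
      LangNE (beta a b (errs a b M A B)) := by
  set f := pw M A B with hf
  set g : ℕ → ℕ := fun i => f^[i] N with hg
  set ns : List ℕ := (List.range t).map (fun i => g (i + 2)) with hns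
  have hhist : (List.range (t + 3)).map g = N :: g 1 :: (ns ++ [E]) := by
    rw [List.range_succ, List.map_append, List.range_succ_eq_map, List.range_succ_eq_map]
    simp [hns, hg, hE, Function.comp_def]
  refine ⟨List.replicate (g 1) a ++ blk a b ns, List.replicate
    (Hw a b N E (List.replicate (g 1) a ++ blk a b ns)).length a, ?_, ?_, ?_⟩
  · have := horb 1
    intro h
    have := congrArg List.length h
    simp [g] at this
    have h1 := horb 1
    simp at h1
    omega
  · simp [Hw]
  have hYe : ∀ k, a :: (List.replicate k a ++ [a]) = List.replicate (k + 2) a := by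
    intro k; rw [List.eq_replicate_iff]; simp; tauto
  rw [hYe, Hw_eq, ← hhist]
  generalize hH : List.replicate 4 a ++ blk a b ((List.range (t + 3)).map g ++ [4]) = H
  have hHlen : 4 ≤ H.length := by rw [← hH]; simp
  have hsplit : (H.splitOn b).map List.length = 4 :: ((List.range (t + 3)).map g ++ [4]) := by
    rw [← hH, split_blk a b hab]
  have hge : ∀ w ∈ H.splitOn b, 4 ≤ w.length := by
    intro w hw
    have : w.length ∈ (H.splitOn b).map List.length := List.mem_map_of_mem hw
    rw [hsplit] at this
    simp only [List.mem_cons, List.mem_append, List.mem_map, List.not_mem_nil, or_false] at this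
    rcases this with h | ⟨i, _, h⟩ | h
    · omega
    · have := horb i; rw [← h]; exact hK4.trans this
    · omega
  intro hmem
  obtain ⟨e, he, s, hs, h1, h2⟩ := wd_mem_conv a b hab _ (by simp [errs])
    (clean_errs a b hab M hM A B hA) H _
    ⟨fun h => by simpa using hge _ h, fun h => by simpa using hge _ h⟩
    (clean_rep a b hab _ (by omega) (by omega)) hmem
  have hlin : ∀ p p' q c c' d, e = errLin a b p p' q c c' d →
      ∃ u v i, 1 ≤ u ∧ 1 ≤ v ∧ p * u + p' * v + q = g i ∧
        c * u + c' * v + d = g (i + 1) := by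
    rintro p p' q c c' d rfl
    simp only [errLin, applySub_cons, applySub_nil, Sum.elim_inr, List.append_nil] at h2
    rw [List.append_eq_replicate_iff, List.append_eq_replicate_iff] at h2
    obtain ⟨_, hu, _, hv, _⟩ := h2
    rw [applySub_errLin a b s _ _ _ _ _ _ _ _ hu hv] at h1
    rw [← h1] at hsplit
    have hsr : ∀ n, ((List.replicate n a).splitOn b).map List.length = [n] := by
      intro n
      have := split_blk a b hab n []
      simpa [blk] using this
    simp only [List.splitOn_append_cons_self, List.map_append, hsr] at hsplit
    obtain ⟨l1, l2, hl⟩ := cancel_ends 4 4 ((List.range (t + 3)).map g)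
      (((s 0).splitOn b).map List.length)
      ([p * (s 2).length + p' * (s 3).length + q] ++ [c * (s 2).length + c' * (s 3).length + d])
      (((s 1).splitOn b).map List.length)
      (by simp [List.splitOn_ne_nil]) (by simp [List.splitOn_ne_nil])
      (by rw [← hsplit, List.append_assoc])
    obtain ⟨i, hi1, hi2⟩ := consec g (t + 3) _ _ l1 l2 hl
    exact ⟨_, _, i, List.length_pos_of_ne_nil (hs 2), List.length_pos_of_ne_nil (hs 3), hi1, hi2⟩
  have hgs : ∀ i, g (i + 1) = pw M A B (g i) := fun i => Function.iterate_succ_apply' _ _ _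
  have hgK : ∀ i, K ≤ g i := horb
  rw [mem_errs] at he
  rcases he with rfl | rfl | he | ⟨c, ⟨hca, hcb⟩, rfl⟩ | ⟨c, hca, rfl⟩ | ⟨r, hr, he⟩ |
    ⟨r, hr, j, hj, he⟩
  · have l1 := congrArg List.length h1
    have l2 := congrArg List.length h2
    simp [errLong, applySub_cons, applySub_nil] at l1 l2
    simp [← hH] at l1 l2
    omega
  · simp only [errEmpty, applySub_cons, applySub_nil, Sum.elim_inr, Sum.elim_inl,
      List.append_nil, List.cons_append, List.nil_append] at h1
    have : ([] : List σ) ∈ H.splitOn b := by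
      rw [← h1, List.splitOn_append_cons_self]
      have := List.splitOn_append_cons_self (a := b) [] (s 1)
      rw [List.nil_append] at this
      rw [this]; simp
    simpa using hge _ this
  · obtain ⟨u, v, i, hu, hv, h3, h4⟩ := hlin _ _ _ _ _ _ he
    rw [hgs, pw] at h4
    have hK := hgK i
    have hA' := hA (g i % M) (Nat.mod_lt _ hM)
    have hdm := Nat.div_add_mod (g i) M
    have hr := Nat.mod_lt (g i) hM
    have hq : 1 ≤ g i / M := Nat.div_pos (by omega) hM
    generalize g i / M = q at *
    have : 1 * q ≤ A (g i % M) * q := Nat.mul_le_mul_right _ hA'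
    have hqu : q ≤ u := by omega
    have h5 : M * q ≤ M * u := Nat.mul_le_mul_left _ hqu
    have h6 : M * 1 ≤ M * u := Nat.mul_le_mul_left _ hu
    have h7 : 2 * M * u = M * u + M * u := by ring
    omega
  · have hcH : c ∈ H := by rw [← h1]; simp [errLetter, applySub_cons]
    rw [← hH, List.mem_append] at hcH
    rcases hcH with h | h
    · exact hca (List.eq_of_mem_replicate h)
    · rcases mem_blk a b _ c h with h | h
      · exact hca h
      · exact hcb h
  · have hcY : c ∈ applySub s (errY c).2 := by simp [errY, applySub_cons]
    rw [h2] at hcY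
    exact hca (List.eq_of_mem_replicate hcY)
  · obtain ⟨u, v, i, hu, hv, h3, h4⟩ := hlin _ _ _ _ _ _ he.symm
    rw [hgs, pw, ← h3] at h4
    have e1 : (M * u + 0 * v + r) % M = r := by
      rw [Nat.zero_mul, Nat.add_zero, Nat.mul_add_mod, Nat.mod_eq_of_lt hr]
    have e2 : (M * u + 0 * v + r) / M = u := by
      rw [Nat.zero_mul, Nat.add_zero, Nat.mul_add_div hM, Nat.div_eq_of_lt hr, Nat.add_zero]
    rw [e1, e2] at h4
    omega
  · obtain ⟨u, v, i, hu, hv, h3, h4⟩ := hlin _ _ _ _ _ _ he.symm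
    rw [hgs, pw, ← h3, ← Nat.mul_add] at h4
    rw [Nat.mul_add_mod, Nat.mod_eq_of_lt hr, Nat.mul_add_div hM, Nat.div_eq_of_lt hr] at h4
    have : A r * 1 ≤ A r * v := Nat.mul_le_mul_left _ hv
    have h8 : A r * (u + v + 0) = A r * u + A r * v := by ring
    omega

/-- constant part of `alpha` before the input -/
noncomputable def alphaPre (a b : σ) (l : List (Pattern σ × Pattern σ)) : Pattern σ :=
  lit (List.replicate (l.length + 1) a ++ b :: ([a, a, a] ++ b :: (dums a b l ++
    (quad a ++ b :: ([a, a] ++ b :: (quad a ++ [b]))))))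
/-- constant part of `alpha` after the input -/
noncomputable def alphaPost (a b : σ) (l : List (Pattern σ × Pattern σ)) (E : ℕ) : Pattern σ :=
  [Sum.inl b, Sum.inr 0] ++ (lit (b :: (List.replicate E a ++ b :: (quad a ++
    (b :: ([a, a] ++ b :: [a]))))) ++ ([Sum.inr 1] ++ lit (a :: b :: ([a, a] ++ b ::
      (dums a b l ++ quad a)))))
/-- the left pattern -/
noncomputable def alpha (a b : σ) (l : List (Pattern σ × Pattern σ)) (E N : ℕ) : Pattern σ :=
  alphaPre a b l ++ (List.replicate N (Sum.inl a) ++ alphaPost a b l E)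

theorem applySub_alpha (a b : σ) (l : List (Pattern σ × Pattern σ)) (E N : ℕ) (s : ℕ → List σ) :
    applySub s (alpha a b l E N) = wd a b l (Hw a b N E (s 0)) (a :: (s 1 ++ [a])) := by
  have : (List.replicate N (Sum.inl a) : Pattern σ) = lit (List.replicate N a) := by
    simp [lit]
  simp only [alpha, alphaPre, alphaPost, this, applySub_append, applySub_lit]
  simp [applySub_cons, applySub_nil, wd, compW, Hw]

theorem incl_iff (a b : σ) (hab : a ≠ b) (M : ℕ) (hM : 0 < M) (A B : ℕ → ℕ)
    (hA : ∀ r < M, 1 ≤ A r) (K : ℕ) (hK : ∀ r < M, 2 * M * (A r + B r) ≤ K) (hKM : M ≤ K)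
    (hK4 : 4 ≤ K) (N E : ℕ) (horb : ∀ t, K ≤ (pw M A B)^[t] N) :
    LangNE (alpha a b (errs a b M A B) E N) ⊆ LangNE (beta a b (errs a b M A B)) ↔
      ¬ ∃ t, (pw M A B)^[t + 2] N = E := by
  constructor
  · rintro h ⟨t, ht⟩
    obtain ⟨x, y, hx, hy, hn⟩ := not_all_mem a b hab M hM A B hA K hKM hK4 N E horb t ht
    apply hn
    apply h
    rw [mem_LangNE_iff a]
    refine ⟨fun n => if n = 0 then x else y, ?_, ?_⟩
    · intro n; by_cases h : n = 0 <;> simp [h, hx, hy]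
    · rw [applySub_alpha]; simp
  · intro hno w hw
    rw [mem_LangNE_iff a] at hw
    obtain ⟨s, hs, rfl⟩ := hw
    rw [applySub_alpha]
    exact all_mem a b M hM A B hA K hK hKM N E horb hno _ _

end errors
end NEInc

namespace NEInc
section machine
open Function

/-- loop programs with while loops -/
inductive Prog : Type
  | skip : Prog
  | inc (r : ℕ) : Prog
  | seq (p q : Prog) : Prog
  | loop (r : ℕ) (p : Prog) : Prog

/-- big step semantics -/
inductive Eval : Prog → (ℕ → ℕ) → (ℕ → ℕ) → Prop
  | skip (ρ) : Eval Prog.skip ρ ρ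
  | inc (r ρ) : Eval (Prog.inc r) ρ (update ρ r (ρ r + 1))
  | seq {p q ρ ρ1 ρ2} : Eval p ρ ρ1 → Eval q ρ1 ρ2 → Eval (Prog.seq p q) ρ ρ2
  | loopZ {r p ρ} : ρ r = 0 → Eval (Prog.loop r p) ρ ρ
  | loopS {r p ρ ρ1 ρ2} : ρ r ≠ 0 → Eval p (update ρ r (ρ r - 1)) ρ1 →
      Eval (Prog.loop r p) ρ1 ρ2 → Eval (Prog.loop r p) ρ ρ2

theorem Eval.congr {p ρ ρ1 ρ2} (h : Eval p ρ ρ1) (e : ρ1 = ρ2) : Eval p ρ ρ2 := e ▸ h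

theorem Eval.for {r p} (G : ℕ → ℕ → ℕ) (n : ℕ) (h0 : ∀ i, G i r = i)
    (h : ∀ i < n, Eval p (update (G (i + 1)) r i) (G i)) :
    Eval (Prog.loop r p) (G n) (G 0) := by
  induction n with
  | zero => exact Eval.loopZ (h0 0)
  | succ n ih =>
    refine Eval.loopS (by rw [h0]; omega) ?_ (ih fun i hi => h i (by omega))
    rw [h0]
    exact h n (by omega)

def pclear (r : ℕ) : Prog := Prog.loop r Prog.skip

theorem eval_clear (r ρ) : Eval (pclear r) ρ (update ρ r 0) := by
  have := Eval.for (r := r) (p := Prog.skip) (fun i => update ρ r i) (ρ r) (by simp)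
    (by intro i hi; simpa using Eval.skip _)
  simpa [pclear] using this

/-- `d += s; s := 0` -/
def pmove (s d : ℕ) : Prog := Prog.loop s (Prog.inc d)

theorem eval_move (s d ρ) (hsd : s ≠ d) :
    Eval (pmove s d) ρ (update (update ρ d (ρ d + ρ s)) s 0) := by
  have := Eval.for (r := s) (p := Prog.inc d)
    (fun i => update (update ρ d (ρ d + (ρ s - i))) s i) (ρ s) (by simp)
    (by
      intro i hi
      refine (Eval.inc _ _).congr ?_
      funext x
      simp only [update_apply]
      split_ifs <;> first | omega | (simp_all; done) | (simp_all; omega))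
  simpa [pmove] using this

/-- `d := s` using the temporary `t` -/
def pcopy (s d t : ℕ) : Prog :=
  Prog.seq (pclear d) (Prog.seq (pmove s t) (Prog.loop t (Prog.seq (Prog.inc s) (Prog.inc d))))

theorem eval_copy (s d t ρ) (hsd : s ≠ d) (hst : s ≠ t) (hdt : d ≠ t) (ht : ρ t = 0) :
    Eval (pcopy s d t) ρ (update ρ d (ρ s)) := by
  refine Eval.seq (eval_clear _ _) (Eval.seq (eval_move _ _ _ hst) ?_)
  have := Eval.for (r := t) (p := Prog.seq (Prog.inc s) (Prog.inc d))
    (fun i => update (update (update ρ d (ρ s - i)) s (ρ s - i)) t i) (ρ s) (by simp)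
    (by
      intro i hi
      refine (Eval.seq (Eval.inc _ _) (Eval.inc _ _)).congr ?_
      funext x
      simp only [update_apply]
      split_ifs <;> first | omega | (simp_all; done) | (simp_all; omega))
  convert this using 1
  · funext x
    simp only [update_apply]
    split_ifs <;> simp_all
  · funext x
    simp only [update_apply]
    split_ifs <;> simp_all

/-- the function `f` can be computed by a program -/
def Cpt {n : ℕ} (f : List.Vector ℕ n → ℕ) : Prop :=
  ∀ (args : Fin n → ℕ) (out base : ℕ), (∀ i, args i < base) → out < base → (∀ i, args i ≠ out) →
    ∃ p, ∀ ρ : ℕ → ℕ, (∀ r, base ≤ r → ρ r = 0) →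
      Eval p ρ (update ρ out (f (List.Vector.ofFn fun i => ρ (args i))))

theorem cpt_clear_range (base j : ℕ) :
    ∃ p, ∀ ρ : ℕ → ℕ, Eval p ρ (fun r => if base ≤ r ∧ r < base + j then 0 else ρ r) := by
  induction j with
  | zero => exact ⟨Prog.skip, fun ρ => (Eval.skip ρ).congr (by funext x; simp)⟩
  | succ j ih =>
    obtain ⟨p, hp⟩ := ih
    refine ⟨Prog.seq p (pclear (base + j)), fun ρ => ((hp ρ).seq (eval_clear _ _)).congr ?_⟩
    funext x
    simp only [update_apply]
    split_ifs <;> first | omega | rfl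

theorem cpt_comp {m n : ℕ} {f : List.Vector ℕ n → ℕ} (g : Fin n → List.Vector ℕ m → ℕ)
    (hf : Cpt f) (hg : ∀ i, Cpt (g i)) : Cpt fun a => f (List.Vector.ofFn fun i => g i a) := by
  intro args out base ha ho hao
  have h1 : ∀ j ≤ n, ∃ p, ∀ ρ : ℕ → ℕ, (∀ r, base ≤ r → ρ r = 0) →
      Eval p ρ (fun r => if h : base ≤ r ∧ r < base + j then
        (if h' : r - base < n then g ⟨r - base, h'⟩ (List.Vector.ofFn fun i => ρ (args i)) else 0)
        else ρ r) := by
    intro j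
    induction j with
    | zero =>
      intro _
      exact ⟨Prog.skip, fun ρ _ => (Eval.skip ρ).congr (by funext x; simp)⟩
    | succ j ih =>
      intro hj
      obtain ⟨p, hp⟩ := ih (by omega)
      obtain ⟨q, hq⟩ := hg ⟨j, hj⟩ args (base + j) (base + n)
        (fun i => by have := ha i; omega) (by omega) (fun i => by have := ha i; omega)
      refine ⟨Prog.seq p q, fun ρ hρ => ((hp ρ hρ).seq (hq _ ?_)).congr ?_⟩
      · intro r hr
        rw [dif_neg (by omega)]
        exact hρ r (by omega)
      · have e : ∀ i, ¬ (base ≤ args i ∧ args i < base + j) := fun i => by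
          have := ha i; omega
        simp only [e, dite_false]
        funext x
        simp only [update_apply]
        by_cases hx : x = base + j
        · subst hx
          rw [if_pos rfl, dif_pos (by omega), dif_pos (by omega)]
          simp
        · rw [if_neg hx]
          by_cases hx2 : base ≤ x ∧ x < base + j
          · rw [dif_pos hx2, dif_pos (by omega), dif_pos (by omega)]
          · rw [dif_neg hx2, dif_neg (by omega)]
  obtain ⟨p, hp⟩ := h1 n le_rfl
  obtain ⟨q, hq⟩ := hf (fun i => base + i) out (base + n) (fun i => by omega) (by omega)
    (fun i => by omega)
  obtain ⟨c, hc⟩ := cpt_clear_range base n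
  refine ⟨Prog.seq p (Prog.seq q c), fun ρ hρ =>
    ((hp ρ hρ).seq ((hq _ ?_).seq (hc _))).congr ?_⟩
  · intro r hr
    rw [dif_neg (by omega)]
    exact hρ r (by omega)
  · funext x
    simp only [update_apply]
    by_cases hx : x = out
    · subst hx
      rw [if_neg (by omega), if_pos rfl, if_pos rfl]
      congr 2
      funext i
      rw [dif_pos (by omega), dif_pos (by omega)]
      simp
    · rw [if_neg hx, if_neg hx]
      by_cases hx2 : base ≤ x ∧ x < base + n
      · rw [if_pos hx2, hρ x hx2.1]
      · rw [if_neg hx2, dif_neg hx2]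

theorem cpt_prec {n : ℕ} {f : List.Vector ℕ n → ℕ} {g : List.Vector ℕ (n + 2) → ℕ}
    (hf : Cpt f) (hg : Cpt g) : Cpt fun v : List.Vector ℕ (n + 1) =>
      v.head.rec (f v.tail) fun y IH => g (y ::ᵥ IH ::ᵥ v.tail) := by
  intro args out base ha ho hao
  obtain ⟨pf, hpf⟩ := hf (fun i => args i.succ) (base + 2) (base + 3)
    (fun i => by have := ha i.succ; omega) (by omega) (fun i => by have := ha i.succ; omega)
  obtain ⟨pg, hpg⟩ := hg (Fin.cons (base + 1) (Fin.cons (base + 2) fun i => args i.succ))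
    (base + 3) (base + 4)
    (by
      intro i
      refine Fin.cases ?_ (fun i => Fin.cases ?_ (fun i => ?_) i) i
      · simp
      · simp
      · have := ha i.succ; simp; omega) (by omega)
    (by
      intro i
      refine Fin.cases ?_ (fun i => Fin.cases ?_ (fun i => ?_) i) i
      · simp
      · simp
      · have := ha i.succ; simp; omega)
  refine ⟨Prog.seq (pcopy (args 0) base (base + 1)) (Prog.seq pf (Prog.seq
    (Prog.loop base (Prog.seq pg (Prog.seq (pclear (base + 2)) (Prog.seq
      (pmove (base + 3) (base + 2)) (Prog.inc (base + 1))))))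
    (Prog.seq (pclear out) (Prog.seq (pmove (base + 2) out) (pclear (base + 1)))))), ?_⟩
  intro ρ hρ
  have ha0 := ha 0
  have hao0 := hao 0
  have hv : (List.Vector.ofFn fun i => ρ (args i)) =
      ρ (args 0) ::ᵥ (List.Vector.ofFn fun i => ρ (args i.succ)) := rfl
  simp only [hv, List.Vector.head_cons, List.Vector.tail_cons]
  generalize hN : ρ (args 0) = N
  generalize hV : (List.Vector.ofFn fun i => ρ (args (Fin.succ i))) = V
  let acc : ℕ → ℕ := fun k => Nat.rec (f V) (fun y IH => g (y ::ᵥ IH ::ᵥ V)) k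
  have hacc : ∀ k, acc (k + 1) = g (k ::ᵥ acc k ::ᵥ V) := fun k => rfl
  let G : ℕ → ℕ → ℕ := fun i r => if r = base then i else if r = base + 1 then N - i else
    if r = base + 2 then acc (N - i) else ρ r
  have hG1 : ∀ i j r, r < base → update (G i) base j r = ρ r := by
    intro i j r hr
    simp only [G, update_apply]
    rw [if_neg (by omega), if_neg (by omega), if_neg (by omega), if_neg (by omega)]
  refine Eval.seq (eval_copy _ _ _ _ (by omega) (by omega) (by omega) (hρ _ (by omega))) ?_
  refine Eval.seq (hpf _ ?_) ?_
  · intro r hr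
    rw [update_of_ne (by omega)]
    exact hρ r (by omega)
  have e1 : update (update ρ base (ρ (args 0))) (base + 2) (f (List.Vector.ofFn fun i =>
      update ρ base (ρ (args 0)) (args (Fin.succ i)))) = G N := by
    have : (List.Vector.ofFn fun i => update ρ base (ρ (args 0)) (args (Fin.succ i))) = V := by
      rw [← hV]; congr 1; funext i
      have := ha i.succ
      rw [update_of_ne (by omega)]
    rw [this]
    funext x
    simp only [G, update_apply, Nat.sub_self]
    split_ifs <;> first | omega | rfl | (subst_vars; exact hρ _ (by omega)) 
  rw [e1]
  refine Eval.seq (Eval.for G N (by simp [G]) ?_) ?_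
  · intro i hi
    refine ((hpg _ ?_).seq ((eval_clear _ _).seq ((eval_move _ _ _ (by omega)).seq
      (Eval.inc _ _)))).congr ?_
    · intro r hr
      simp only [G, update_apply]
      rw [if_neg (by omega), if_neg (by omega), if_neg (by omega), if_neg (by omega)]
      exact hρ r (by omega)
    · have e2 : (List.Vector.ofFn fun j => update (G (i + 1)) base i
          ((Fin.cons (base + 1) (Fin.cons (base + 2) fun i => args i.succ) : Fin (n + 2) → ℕ) j)) =
          (N - (i + 1)) ::ᵥ acc (N - (i + 1)) ::ᵥ V := by
        rw [← hV]
        simp only [List.Vector.ofFn, Fin.cons_zero, Fin.cons_succ]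
        congr 1
        · simp [G]
        · congr 1
          · simp [G]
          · congr 1; funext j; exact hG1 _ _ _ (ha _)
      rw [e2, ← hacc, show N - (i + 1) + 1 = N - i by omega]
      have h3 := hρ (base + 3) (by omega)
      funext x
      simp only [G, update_apply]
      split_ifs <;> first | omega | (simp_all; done) | (simp_all; omega)
  · refine ((eval_clear _ _).seq ((eval_move _ _ _ (by omega)).seq (eval_clear _ _))).congr ?_
    have h0 := hρ (base) (by omega)
    have h1 := hρ (base + 1) (by omega)
    have h2 := hρ (base + 2) (by omega)
    funext x
    simp only [G, update_apply]
    change _ = if x = out then acc N else ρ x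
    split_ifs <;> first | omega | (simp_all; done) | (simp_all; omega)

theorem cpt_of_primrec {n : ℕ} {f : List.Vector ℕ n → ℕ} (h : Nat.Primrec' f) : Cpt f := by
  induction h with
  | zero =>
    intro args out base ha ho hao
    exact ⟨pclear out, fun ρ _ => eval_clear _ _⟩
  | succ =>
    intro args out base ha ho hao
    have := ha 0
    have := hao 0
    refine ⟨Prog.seq (pcopy (args 0) out base) (Prog.inc out), fun ρ hρ =>
      ((eval_copy _ _ _ _ (by omega) (by omega) (by omega) (hρ _ le_rfl)).seq
        (Eval.inc _ _)).congr ?_⟩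
    simp
  | get i =>
    intro args out base ha ho hao
    have := ha i
    have := hao i
    refine ⟨pcopy (args i) out base, fun ρ hρ =>
      (eval_copy _ _ _ _ (by omega) (by omega) (by omega) (hρ _ le_rfl)).congr ?_⟩
    simp
  | comp g _ _ hf hg => exact cpt_comp g hf hg
  | prec _ _ hf hg => exact cpt_prec hf hg

/-- machine instructions -/
inductive Instr : Type
  | inc (r : ℕ) : Instr
  | jzd (r t : ℕ) : Instr
  | jmp (t : ℕ) : Instr

/-- one machine step -/
def mstep (cd : List Instr) (x : ℕ × (ℕ → ℕ)) : ℕ × (ℕ → ℕ) :=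
  match cd[x.1]? with
  | some (Instr.inc r) => (x.1 + 1, update x.2 r (x.2 r + 1))
  | some (Instr.jzd r t) => if x.2 r = 0 then (t, x.2) else (x.1 + 1, update x.2 r (x.2 r - 1))
  | some (Instr.jmp t) => (t, x.2)
  | none => x

def plen : Prog → ℕ
  | Prog.skip => 0
  | Prog.inc _ => 1
  | Prog.seq p q => plen p + plen q
  | Prog.loop _ p => plen p + 2

def code : Prog → ℕ → List Instr
  | Prog.skip, _ => []
  | Prog.inc r, _ => [Instr.inc r]
  | Prog.seq p q, s => code p s ++ code q (s + plen p)
  | Prog.loop r p, s => Instr.jzd r (s + plen p + 2) :: (code p (s + 1) ++ [Instr.jmp s])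

theorem length_code (p : Prog) (s : ℕ) : (code p s).length = plen p := by
  induction p generalizing s with
  | skip => rfl
  | inc r => rfl
  | seq p q hp hq => simp [code, plen, hp, hq]
  | loop r p hp => simp [code, plen, hp]

def Reach (cd : List Instr) (x y : ℕ × (ℕ → ℕ)) : Prop := ∃ n, (mstep cd)^[n] x = y

theorem Reach.trans {cd x y z} (h1 : Reach cd x y) (h2 : Reach cd y z) : Reach cd x z := by
  obtain ⟨n, rfl⟩ := h1
  obtain ⟨m, rfl⟩ := h2
  exact ⟨m + n, by rw [Function.iterate_add_apply]⟩

theorem Reach.one {cd x y} (h : mstep cd x = y) : Reach cd x y := ⟨1, h⟩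

theorem reach_of_eval {p ρ ρ'} (h : Eval p ρ ρ') (cd : List Instr) (s : ℕ) (pre post : List Instr)
    (hc : cd = pre ++ (code p s ++ post)) (hs : s = pre.length) :
    Reach cd (s, ρ) (s + plen p, ρ') := by
  induction h generalizing s pre post with
  | skip => exact ⟨0, rfl⟩
  | inc r ρ =>
    apply Reach.one
    subst hs hc
    simp [mstep, code, plen]
  | @seq p q ρ ρ1 ρ2 _ _ hp hq =>
    have h1 := hp s pre (code q (s + plen p) ++ post) (by rw [hc]; simp [code]) hs
    have h2 := hq (s + plen p) (pre ++ code p s) post (by rw [hc]; simp [code])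
      (by simp [length_code, hs])
    have := h1.trans h2
    rwa [Nat.add_assoc] at this
  | @loopZ r p ρ h0 =>
    apply Reach.one
    subst hs hc
    simp [mstep, code, plen, h0, Nat.add_assoc]
  | @loopS r p ρ ρ1 ρ2 h0 _ _ hp hq =>
    have h1 : Reach cd (s, ρ) (s + 1, update ρ r (ρ r - 1)) := by
      apply Reach.one
      subst hs hc
      simp [mstep, code, h0]
    have h2 := hp (s + 1) (pre ++ [Instr.jzd r (s + plen p + 2)]) (Instr.jmp s :: post)
      (by rw [hc]; simp [code]) (by simp [hs])
    have h3 : Reach cd (s + 1 + plen p, ρ1) (s, ρ1) := by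
      apply Reach.one
      have : cd = (pre ++ (Instr.jzd r (s + plen p + 2) :: code p (s + 1))) ++
          (Instr.jmp s :: post) := by rw [hc]; simp [code]
      have h4 : s + 1 + plen p = (pre ++ (Instr.jzd r (s + plen p + 2) :: code p (s + 1))).length := by
        simp [length_code, hs]; omega
      rw [h4, this]
      simp only [mstep]
      simp
    exact ((h1.trans h2).trans h3).trans (hq s pre post hc hs)

/-- three-register state -/
def st3 (k t o : ℕ) : ℕ → ℕ := fun r => if r = 0 then k else if r = 1 then t else
  if r = 2 then o else 0

theorem machine_exists (F : ℕ → ℕ → ℕ) (hF : Primrec₂ F) (hF1 : ∀ k t, F k t = 0 ∨ F k t = 1) :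
    ∃ cd : List Instr, ∀ k, (∃ n, (mstep cd)^[n] (0, update (fun _ => 0) 0 k) =
      (cd.length, fun _ => 0)) ↔ ∃ t, F k t = 0 := by
  obtain ⟨pF, hpF⟩ := cpt_of_primrec (Nat.Primrec'.prim_iff₂.2 hF) ![0, 1] 2 3
    (by intro i; fin_cases i <;> simp) (by omega) (by intro i; fin_cases i <;> simp)
  set body := Prog.seq pF (Prog.inc 1) with hbody
  have hb : ∀ k t, Eval body (st3 k t 0) (st3 k (t + 1) (F k t)) := by
    intro k t
    refine ((hpF _ ?_).seq (Eval.inc _ _)).congr ?_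
    · intro r hr
      simp only [st3]
      rw [if_neg (by omega), if_neg (by omega), if_neg (by omega)]
    · funext x
      simp only [List.Vector.ofFn, st3, update_apply]
      split_ifs <;> simp_all
  have hu : ∀ k t o o', update (st3 k t o) 2 o' = st3 k t o' := by
    intro k t o o'
    funext x
    simp only [st3, update_apply]
    split_ifs <;> simp_all
  set main := Prog.seq (Prog.inc 2) (Prog.seq (Prog.loop 2 body) (Prog.seq (pclear 0) (pclear 1)))
    with hmain
  have hst : ∀ k, update (fun _ => 0) 0 k = st3 k 0 0 := by
    intro k; funext x; simp only [st3, update_apply]; split_ifs <;> rfl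
  refine ⟨code main 0, fun k => ?_⟩
  rw [hst]
  have hi : Eval (Prog.inc 2) (st3 k 0 0) (st3 k 0 1) :=
    (Eval.inc _ _).congr (by rw [hu]; rfl)
  constructor
  · rintro ⟨n, hn⟩
    by_contra hno
    push Not at hno
    have hone : ∀ t, F k t = 1 := fun t => (hF1 k t).resolve_left (hno t)
    set cd := code main 0 with hc
    have hfix : mstep cd (cd.length, fun _ => 0) = (cd.length, fun _ => 0) := by simp [mstep]
    have hlate : ∀ t, ∃ m, t ≤ m ∧ (mstep cd)^[m] (0, st3 k 0 0) = (1, st3 k t 1) := by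
      intro t
      induction t with
      | zero =>
        obtain ⟨m, hm⟩ := reach_of_eval hi cd 0 [] _ (by rw [hc, hmain, code]; rfl) rfl
        exact ⟨m, by omega, by rw [hm]; rfl⟩
      | succ t ih =>
        obtain ⟨m, hm, hm'⟩ := ih
        have h1 : mstep cd (1, st3 k t 1) = (2, st3 k t 0) := by
          have : cd[1]? = some (Instr.jzd 2 (1 + plen body + 2)) := rfl
          simp only [mstep, this]
          simp [st3, hu]
        obtain ⟨m2, hm2⟩ := reach_of_eval (hb k t) cd 2 [Instr.inc 2, Instr.jzd 2 (1 + plen body + 2)]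
          (Instr.jmp 1 :: code (Prog.seq (pclear 0) (pclear 1)) (1 + (plen body + 2)))
          (by rw [hc, hmain]; simp [code, plen]) rfl
        have h3 : mstep cd (2 + plen body, st3 k (t + 1) (F k t)) = (1, st3 k (t + 1) 1) := by
          have : cd[2 + plen body]? = some (Instr.jmp 1) := by
            have h4 : cd = ([Instr.inc 2, Instr.jzd 2 (1 + plen body + 2)] ++ code body 2) ++
                (Instr.jmp 1 :: code (Prog.seq (pclear 0) (pclear 1)) (1 + (plen body + 2))) := by
              rw [hc, hmain]; simp [code, plen]
            have h5 : 2 + plen body =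
                ([Instr.inc 2, Instr.jzd 2 (1 + plen body + 2)] ++ code body 2).length := by
              simp [length_code]; omega
            rw [h4, List.getElem?_append_right (by omega), ← h5]
            simp
          simp only [mstep, this, hone]
        refine ⟨1 + (m2 + (1 + m)), by omega, ?_⟩
        rw [Function.iterate_add_apply, Function.iterate_add_apply, Function.iterate_add_apply, hm',
          Function.iterate_one, h1, hm2, h3]
    obtain ⟨m, hm, hm'⟩ := hlate n
    have : (mstep cd)^[m] (0, st3 k 0 0) = (cd.length, fun _ => 0) := by
      rw [show m = (m - n) + n by omega, Function.iterate_add_apply, hn,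
        Function.iterate_fixed hfix]
    rw [hm'] at this
    have := congrFun (congrArg Prod.snd this) 2
    simp [st3] at this
  · intro hex
    have hex' := hex
    classical
    obtain ⟨T, hT, hTmin⟩ : ∃ T, F k T = 0 ∧ ∀ i < T, F k i = 1 :=
      ⟨Nat.find hex, Nat.find_spec hex, fun i hi => (hF1 k i).resolve_left (Nat.find_min hex hi)⟩
    have hl : ∀ d t, t + d = T → Eval (Prog.loop 2 body) (st3 k t 1) (st3 k (T + 1) 0) := by
      intro d
      induction d with
      | zero =>
        rintro t rfl
        refine Eval.loopS (by simp [st3]) (ρ1 := st3 k (t + 1) (F k t)) ?_ ?_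
        · rw [hu]; exact hb k t
        · rw [show F k t = 0 from hT]; exact Eval.loopZ rfl
      | succ d ih =>
        intro t ht
        refine Eval.loopS (by simp [st3]) (ρ1 := st3 k (t + 1) (F k t)) ?_ ?_
        · rw [hu]; exact hb k t
        · rw [hTmin t (by omega)]; exact ih (t + 1) (by omega)
    have hm : Eval main (st3 k 0 0) (fun _ => 0) := by
      refine (hi.seq ((hl T 0 (by omega)).seq ((eval_clear _ _).seq (eval_clear _ _)))).congr ?_
      funext x
      rcases x with _ | _ | _ | x <;> simp [st3, update_apply]
    have := reach_of_eval hm (code main 0) 0 [] [] (by simp) rfl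
    rw [length_code]
    simpa [Reach] using this

end machine
end NEInc

namespace NEInc
section encoding
open Function

/-- bounds on the registers and targets of an instruction -/
def InsOk (S R : ℕ) : Instr → Prop
  | Instr.inc r => r < R
  | Instr.jzd r t => r < R ∧ t < S
  | Instr.jmp t => t < S

theorem exists_bounds (cd : List Instr) : ∃ S R, ∀ i ∈ cd, InsOk S R i := by
  induction cd with
  | nil => exact ⟨0, 0, by simp⟩
  | cons i cd ih =>
    obtain ⟨S, R, h⟩ := ih
    have mono : ∀ S' R' i, S ≤ S' → R ≤ R' → InsOk S R i → InsOk S' R' i := by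
      intro S' R' i hS hR hi
      cases i <;> simp only [InsOk] at * <;> omega
    cases i with
    | inc r =>
      refine ⟨S, R + r + 1, ?_⟩
      simp only [List.mem_cons, forall_eq_or_imp]
      exact ⟨by simp only [InsOk]; omega, fun j hj => mono _ _ _ (by omega) (by omega) (h j hj)⟩
    | jzd r t =>
      refine ⟨S + t + 1, R + r + 1, ?_⟩
      simp only [List.mem_cons, forall_eq_or_imp]
      exact ⟨by simp only [InsOk]; omega, fun j hj => mono _ _ _ (by omega) (by omega) (h j hj)⟩
    | jmp t =>
      refine ⟨S + t + 1, R, ?_⟩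
      simp only [List.mem_cons, forall_eq_or_imp]
      exact ⟨by simp only [InsOk]; omega, fun j hj => mono _ _ _ (by omega) (by omega) (h j hj)⟩

/-- the `i`-th prime -/
noncomputable def pr (i : ℕ) : ℕ := Nat.nth Nat.Prime i

theorem pr_prime (i : ℕ) : (pr i).Prime := Nat.prime_nth_prime i
theorem pr_pos (i : ℕ) : 0 < pr i := (pr_prime i).pos
theorem pr_inj : Function.Injective pr := Nat.nth_injective Nat.infinite_setOfPred_prime
theorem pr_zero : pr 0 = 2 := Nat.nth_prime_zero_eq_two

/-- numeric step -/
noncomputable def nstep (cd : List Instr) (S : ℕ) (s X : ℕ) : ℕ :=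
  match cd[s]? with
  | some (Instr.inc r) => S * (pr r * X) + (s + 1)
  | some (Instr.jzd r t) => if pr r ∣ X then S * (X / pr r) + (s + 1) else S * X + t
  | some (Instr.jmp t) => S * X + t
  | none => S * X + s

/-- slope -/
noncomputable def cA (cd : List Instr) (S P : ℕ) (n : ℕ) : ℕ :=
  match cd[n % S]? with
  | some (Instr.inc r) => S * P * pr r
  | some (Instr.jzd r _) => if pr r ∣ n / S then S * (P / pr r) else S * P
  | some (Instr.jmp _) => S * P
  | none => S * P

/-- offset -/
noncomputable def cB (cd : List Instr) (S : ℕ) (n : ℕ) : ℕ := nstep cd S (n % S) (n / S)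

theorem pw_eq (cd : List Instr) (S R P : ℕ) (hS : 0 < S) (hok : ∀ i ∈ cd, InsOk S R i)
    (hP : ∀ r < R, pr r ∣ P) (n : ℕ) :
    pw (S * P) (cA cd S P) (cB cd S) n = nstep cd S (n % S) (n / S) := by
  have h1 : n % (S * P) % S = n % S := Nat.mod_mul_right_mod _ _ _
  have h2 : n / S = P * (n / (S * P)) + n % (S * P) / S := by
    have := Nat.div_add_mod n (S * P)
    conv_lhs => rw [← this, Nat.mul_assoc, Nat.mul_add_div hS]
  rw [pw, cA, cB, h1, h2]
  generalize n % (S * P) / S = x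
  generalize n / (S * P) = q
  generalize n % S = s
  unfold nstep
  cases hi : cd[s]? with
  | none => simp only; ring
  | some i =>
    have hio := hok i (List.mem_of_getElem? hi)
    cases i with
    | inc r => simp only; ring
    | jmp t => simp only; ring
    | jzd r t =>
      simp only
      obtain ⟨P', rfl⟩ := hP r hio.1
      have hp := pr_pos r
      have e : pr r ∣ pr r * P' * q + x ↔ pr r ∣ x := by
        rw [Nat.mul_assoc]; exact (Nat.dvd_add_right (Dvd.intro _ rfl))
      by_cases hx : pr r ∣ x
      · rw [if_pos hx, if_pos hx, if_pos (e.2 hx), Nat.mul_div_cancel_left _ hp,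
          Nat.mul_assoc (pr r) P' q,
          Nat.mul_add_div hp]
        ring
      · rw [if_neg hx, if_neg hx, if_neg (fun h => hx (e.1 h))]
        ring

/-- encoding of the registers -/
noncomputable def encR (W R : ℕ) (ρ : ℕ → ℕ) : ℕ := W * ∏ i ∈ Finset.range R, pr i ^ ρ i

theorem encR_inc (W R : ℕ) (ρ : ℕ → ℕ) (r v : ℕ) (hr : r < R) :
    encR W R (update ρ r (v + 1)) = pr r * encR W R (update ρ r v) := by
  have hm := Finset.mem_range.2 hr
  have : ∀ v, ∏ i ∈ Finset.range R, pr i ^ (update ρ r v i) =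
      pr r ^ v * ∏ i ∈ (Finset.range R).erase r, pr i ^ ρ i := by
    intro v
    rw [← Finset.mul_prod_erase _ _ hm]
    congr 1
    · simp
    · refine Finset.prod_congr rfl fun i hi => ?_
      rw [update_of_ne (Finset.ne_of_mem_erase hi)]
  rw [encR, encR, this, this, pow_succ]
  ring

theorem dvd_encR (W R : ℕ) (hW : W.Prime) (hWR : ∀ i < R, pr i ≠ W) (ρ : ℕ → ℕ) (r : ℕ)
    (hr : r < R) : pr r ∣ encR W R ρ ↔ ρ r ≠ 0 := by
  constructor
  · intro h h0
    rw [encR, (pr_prime r).dvd_mul] at h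
    rcases h with h | h
    · exact hWR r hr ((Nat.prime_dvd_prime_iff_eq (pr_prime r) hW).1 h)
    · obtain ⟨i, hi, h⟩ := ((pr_prime r).prime.dvd_finsetProd_iff _).1 h
      have := (Nat.prime_dvd_prime_iff_eq (pr_prime r) (pr_prime i)).1
        ((pr_prime r).dvd_of_dvd_pow h)
      have := pr_inj this
      subst this
      rw [h0, pow_zero] at h
      exact (pr_prime r).one_lt.ne' (Nat.dvd_one.1 h)
  · intro h
    obtain ⟨v, hv⟩ := Nat.exists_eq_succ_of_ne_zero h
    have := encR_inc W R ρ r v hr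
    rw [← Nat.succ_eq_add_one, ← hv, update_eq_self] at this
    rw [this]
    exact Dvd.intro _ rfl

/-- encoding of configurations -/
noncomputable def encC (S W R : ℕ) (x : ℕ × (ℕ → ℕ)) : ℕ := S * encR W R x.2 + x.1

theorem encC_step (cd : List Instr) (S R P W : ℕ) (hS : cd.length < S)
    (hok : ∀ i ∈ cd, InsOk S R i) (hP : ∀ r < R, pr r ∣ P) (hW : W.Prime)
    (hWR : ∀ i < R, pr i ≠ W) (x : ℕ × (ℕ → ℕ)) (hx : x.1 < S) :
    (mstep cd x).1 < S ∧
    pw (S * P) (cA cd S P) (cB cd S) (encC S W R x) = encC S W R (mstep cd x) := by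
  rw [pw_eq cd S R P (by omega) hok hP]
  have e1 : encC S W R x % S = x.1 := by rw [encC, Nat.mul_add_mod, Nat.mod_eq_of_lt hx]
  have e2 : encC S W R x / S = encR W R x.2 := by
    rw [encC, Nat.mul_add_div (by omega), Nat.div_eq_of_lt hx, Nat.add_zero]
  rw [e1, e2]
  obtain ⟨s, ρ⟩ := x
  simp only at hx
  unfold nstep mstep
  simp only
  cases hi : cd[s]? with
  | none => exact ⟨hx, rfl⟩
  | some i =>
    have hio := hok i (List.mem_of_getElem? hi)
    have hs : s < cd.length := (List.getElem?_eq_some_iff.1 hi).1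
    cases i with
    | inc r =>
      refine ⟨by simp only; omega, ?_⟩
      simp only [encC]
      rw [encR_inc W R ρ r _ hio, update_eq_self]
    | jmp t => exact ⟨hio, rfl⟩
    | jzd r t =>
      simp only
      have hd := dvd_encR W R hW hWR ρ r hio.1
      by_cases h0 : ρ r = 0
      · rw [if_pos h0, if_neg (fun h => hd.1 h h0)]
        exact ⟨hio.2, rfl⟩
      · rw [if_neg h0, if_pos (hd.2 h0)]
        refine ⟨by simp only; omega, ?_⟩
        simp only [encC]
        congr 2
        have := encR_inc W R ρ r (ρ r - 1) hio.1
        rw [show ρ r - 1 + 1 = ρ r by omega, update_eq_self] at this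
        rw [this, Nat.mul_div_cancel_left _ (pr_pos r)]

theorem encR_inj (W R : ℕ) (hW : W.Prime) (hWR : ∀ i < R, pr i ≠ W) (ρ : ℕ → ℕ)
    (h : encR W R ρ = W) : ∀ i < R, ρ i = 0 := by
  intro i hi
  by_contra h0
  have := (dvd_encR W R hW hWR ρ i hi).2 h0
  rw [h] at this
  exact hWR i hi ((Nat.prime_dvd_prime_iff_eq (pr_prime i) hW).1 this)

theorem mstep_supp (cd : List Instr) (S R : ℕ) (hok : ∀ i ∈ cd, InsOk S R i)
    (x : ℕ × (ℕ → ℕ)) (hx : ∀ r, R ≤ r → x.2 r = 0) : ∀ r, R ≤ r → (mstep cd x).2 r = 0 := by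
  intro r' hr'
  unfold mstep
  cases hi : cd[x.1]? with
  | none => exact hx _ hr'
  | some i =>
    have hio := hok i (List.mem_of_getElem? hi)
    cases i with
    | inc r =>
      have : r < R := hio
      simp only
      rw [update_of_ne (by omega)]
      exact hx _ hr'
    | jmp t => exact hx _ hr'
    | jzd r t =>
      have : r < R := hio.1
      simp only
      split_ifs
      · exact hx _ hr'
      · simp only
        rw [update_of_ne (by omega)]
        exact hx _ hr'

/-- the arithmetic form of the halting problem -/
theorem arith_exists (F : ℕ → ℕ → ℕ) (hF : Primrec₂ F) (hF1 : ∀ k t, F k t = 0 ∨ F k t = 1) :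
    ∃ (M : ℕ) (A B : ℕ → ℕ) (K E C : ℕ), 0 < M ∧ (∀ r < M, 1 ≤ A r) ∧
      (∀ r < M, 2 * M * (A r + B r) ≤ K) ∧ M ≤ K ∧ 4 ≤ K ∧
      ∀ k, (∀ t, K ≤ (pw M A B)^[t] (C * 2 ^ k)) ∧
        ((∃ t, (pw M A B)^[t + 2] (C * 2 ^ k) = E) ↔ ∃ t, F k t = 0) := by
  obtain ⟨cd, hcd⟩ := machine_exists F hF hF1
  obtain ⟨S0, R0, hok0⟩ := exists_bounds cd
  obtain ⟨S, R, hS, hR, hok⟩ : ∃ S R, cd.length < S ∧ 0 < R ∧ ∀ i ∈ cd, InsOk S R i := by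
    refine ⟨S0 + cd.length + 1, R0 + 1, by omega, by omega, fun i hi => ?_⟩
    have := hok0 i hi
    cases i <;> simp only [InsOk] at * <;> omega
  set P := ∏ i ∈ Finset.range R, pr i with hPdef
  have hP : ∀ r < R, pr r ∣ P := fun r hr => Finset.dvd_prod_of_mem _ (Finset.mem_range.2 hr)
  have hPpos : 0 < P := Finset.prod_pos fun i _ => pr_pos i
  set A := cA cd S P
  set B := cB cd S
  set M := S * P with hM
  have hMpos : 0 < M := Nat.mul_pos (by omega) hPpos
  have hA : ∀ r, 1 ≤ A r := by
    intro n
    simp only [A, cA]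
    cases hi : cd[n % S]? with
    | none => exact hMpos
    | some i =>
      have hio := hok i (List.mem_of_getElem? hi)
      cases i with
      | inc r => exact Nat.mul_pos hMpos (pr_pos r)
      | jmp t => exact hMpos
      | jzd r t =>
        simp only
        split_ifs
        · exact Nat.mul_pos (by omega) (Nat.div_pos (Nat.le_of_dvd hPpos (hP r hio.1)) (pr_pos r))
        · exact hMpos
  set K := M + 4 + ∑ r ∈ Finset.range M, 2 * M * (A r + B r) with hK
  obtain ⟨W, hWge, hW⟩ := Nat.exists_infinite_primes (K + P + 1)
  have hWR : ∀ i < R, pr i ≠ W := by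
    intro i hi h
    have := Nat.le_of_dvd hPpos (hP i hi)
    omega
  refine ⟨M, A, B, K, encC S W R (cd.length, fun _ => 0), S * W, hMpos, fun r _ => hA r, ?_,
    by omega, by omega, fun k => ?_⟩
  · intro r hr
    have := Finset.single_le_sum (f := fun r => 2 * M * (A r + B r)) (fun _ _ => Nat.zero_le _)
      (Finset.mem_range.2 hr)
    omega
  set x0 : ℕ × (ℕ → ℕ) := (0, update (fun _ => 0) 0 k) with hx0
  have hstart : S * W * 2 ^ k = encC S W R x0 := by
    simp only [encC, hx0, Nat.add_zero, encR]
    rw [Finset.prod_eq_single 0, pr_zero]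
    · simp [Nat.mul_assoc]
    · intro i _ hi; simp [hi]
    · intro h; exact absurd (Finset.mem_range.2 hR) h
  have hiter : ∀ t, ((mstep cd)^[t] x0).1 < S ∧ (∀ r, R ≤ r → ((mstep cd)^[t] x0).2 r = 0) ∧
      (pw M A B)^[t] (S * W * 2 ^ k) = encC S W R ((mstep cd)^[t] x0) := by
    intro t
    induction t with
    | zero =>
      refine ⟨by simp [hx0]; omega, ?_, hstart⟩
      intro r hr
      simp only [Function.iterate_zero, id, hx0]
      rw [update_of_ne (by omega)]
    | succ t ih =>
      obtain ⟨h1, h2, h3⟩ := ih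
      have := encC_step cd S R P W hS hok hP hW hWR _ h1
      simp only [Function.iterate_succ_apply']
      exact ⟨this.1, mstep_supp cd S R hok _ h2, by rw [h3]; exact this.2⟩
  constructor
  · intro t
    rw [(hiter t).2.2, encC]
    have h1 : W ≤ encR W R ((mstep cd)^[t] x0).2 := by
      rw [encR]
      exact Nat.le_mul_of_pos_right _ (Finset.prod_pos fun i _ => Nat.pow_pos (pr_pos i))
    have h2 : encR W R ((mstep cd)^[t] x0).2 ≤ S * encR W R ((mstep cd)^[t] x0).2 :=
      Nat.le_mul_of_pos_left _ (by omega)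
    omega
  · rw [← hcd k]
    have hfix : mstep cd (cd.length, fun _ => 0) = (cd.length, fun _ => 0) := by simp [mstep]
    constructor
    · rintro ⟨t, ht⟩
      refine ⟨t + 2, ?_⟩
      obtain ⟨h1, h2, h3⟩ := hiter (t + 2)
      rw [h3] at ht
      generalize (mstep cd)^[t + 2] x0 = y at *
      obtain ⟨s, ρ⟩ := y
      simp only [encC] at ht h1 h2
      have hz : encR W R (fun _ => 0) = W := by simp [encR]
      have e1 := congrArg (· % S) ht
      have e2 := congrArg (· / S) ht
      simp only [Nat.mul_add_mod, Nat.mod_eq_of_lt h1, Nat.mod_eq_of_lt hS] at e1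
      simp only [Nat.mul_add_div (show 0 < S by omega), Nat.div_eq_of_lt h1,
        Nat.div_eq_of_lt hS, Nat.add_zero, hz] at e2
      have := encR_inj W R hW hWR ρ e2
      ext1
      · exact e1
      · funext i
        by_cases hi : i < R
        · exact this i hi
        · exact h2 i (by omega)
    · rintro ⟨n, hn⟩
      refine ⟨n, ?_⟩
      rw [(hiter (n + 2)).2.2]
      congr 1
      rw [Nat.add_comm, Function.iterate_add_apply, hn, Function.iterate_fixed hfix]

/-- the halting test -/
def haltF (k t : ℕ) : ℕ :=
  if (Nat.Partrec.Code.evaln t (Denumerable.ofNat Nat.Partrec.Code k) 0).isSome then 0 else 1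

theorem haltF_primrec : Primrec₂ haltF := by
  have h : Primrec fun p : ℕ × ℕ =>
      Nat.Partrec.Code.evaln p.2 (Denumerable.ofNat Nat.Partrec.Code p.1) 0 :=
    Nat.Partrec.Code.primrec_evaln.comp (Primrec.pair (Primrec.pair Primrec.snd
      ((Primrec.ofNat _).comp Primrec.fst)) (Primrec.const 0))
  have h2 : PrimrecPred fun p : ℕ × ℕ =>
      (Nat.Partrec.Code.evaln p.2 (Denumerable.ofNat Nat.Partrec.Code p.1) 0).isSome = true :=
    Primrec.eq.comp (Primrec.option_isSome.comp h) (Primrec.const true)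
  exact (Primrec.ite h2 (Primrec.const 0) (Primrec.const 1))

theorem haltF_zero (c : Nat.Partrec.Code) :
    (∃ t, haltF (Encodable.encode c) t = 0) ↔ (Nat.Partrec.Code.eval c 0).Dom := by
  rw [Part.dom_iff_mem]
  simp only [haltF, Denumerable.ofNat_encode, Nat.Partrec.Code.evaln_complete]
  constructor
  · rintro ⟨t, ht⟩
    by_cases h : (Nat.Partrec.Code.evaln t c 0).isSome
    · obtain ⟨y, hy⟩ := Option.isSome_iff_exists.1 h
      exact ⟨y, t, hy⟩
    · simp [h] at ht
  · rintro ⟨y, t, hy⟩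
    refine ⟨t, ?_⟩
    rw [Option.mem_def] at hy
    simp [hy]

end encoding
end NEInc

theorem inclusion_NEPattern_undecidable
    (σ : Type) [Fintype σ] [Primcodable σ] (hcard : 2 ≤ Fintype.card σ) :
    ¬ ComputablePred fun inp : Pattern σ × Pattern σ => LangNE inp.1 ⊆ LangNE inp.2 := by
  classical
  intro hcomp
  obtain ⟨a, b, hab⟩ := Fintype.exists_pair_of_one_lt_card (show 1 < Fintype.card σ by omega)
  obtain ⟨M, A, B, K, E, C, hM, hA, hK, hKM, hK4, hk⟩ :=
    NEInc.arith_exists NEInc.haltF NEInc.haltF_primrec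
      (by intro k t; unfold NEInc.haltF; split_ifs <;> simp)
  apply ComputablePred.halting_problem 0
  set l := NEInc.errs a b M A B
  have hred : ∀ c : Nat.Partrec.Code,
      ¬ (LangNE (NEInc.alpha a b l E (C * 2 ^ (Encodable.encode c))) ⊆ LangNE (NEInc.beta a b l)) ↔
        (Nat.Partrec.Code.eval c 0).Dom := by
    intro c
    obtain ⟨h1, h2⟩ := hk (Encodable.encode c)
    rw [NEInc.incl_iff a b hab M hM A B hA K hK hKM hK4 _ E h1, h2, NEInc.haltF_zero, not_not]
  have hf : Computable fun c : Nat.Partrec.Code =>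
      ((NEInc.alpha a b l E (C * 2 ^ (Encodable.encode c)), NEInc.beta a b l) :
        Pattern σ × Pattern σ) := by
    have hN : Primrec fun c : Nat.Partrec.Code => C * 2 ^ (Encodable.encode c) :=
      Primrec.nat_mul.comp (Primrec.const C) (by
        have h2 : Primrec (Nat.rec 1 (fun _ ih => 2 * ih) : ℕ → ℕ) :=
          Primrec.nat_rec₁ 1 (Primrec.nat_mul.comp (Primrec.const 2) Primrec.snd).to₂
        refine (h2.comp Primrec.encode).of_eq fun c => ?_
        induction Encodable.encode c with
        | zero => rfl
        | succ n ih => rw [pow_succ, Nat.mul_comm, ← ih])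
    have hrep : Primrec fun c : Nat.Partrec.Code =>
        (List.replicate (C * 2 ^ (Encodable.encode c)) (Sum.inl a) : List (σ ⊕ ℕ)) := by
      have : Primrec fun n : ℕ => (List.range n).map fun _ => (Sum.inl a : σ ⊕ ℕ) :=
        Primrec.list_map Primrec.list_range (Primrec.const (Sum.inl a)).to₂
      refine (this.comp hN).of_eq fun c => ?_
      simp [List.map_const']
    refine (Primrec.pair ?_ (Primrec.const _)).to_comp
    exact Primrec.list_append.comp (Primrec.const (NEInc.alphaPre a b l))
      (Primrec.list_append.comp hrep (Primrec.const (NEInc.alphaPost a b l E)))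
  have h2 : ComputablePred fun c : Nat.Partrec.Code =>
      LangNE (NEInc.alpha a b l E (C * 2 ^ (Encodable.encode c))) ⊆ LangNE (NEInc.beta a b l) :=
    ComputablePred.computable_of_manyOneReducible ⟨_, hf, fun c => Iff.rfl⟩ hcomp
  exact h2.not.of_eq hred
end
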